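/- arXiv:2208.14198 — 2 statements merged into one kernel-verified Lean document; each statement's English description precedes it below -/
import Mathlib

section
/- Let (T(t))_{t≥0} be a C₀-semigroup on a complex Banach space X with ‖T(t)‖ ≤ M for all t ≥ 0, where M ≥ 1. Suppose there exist a complex number ζ with |ζ| = 1 and K ≥ 1/2 such that ‖(ζI − T(t))x‖ ≥ ‖x‖/K for all x ∈ X and all t > 0. Then (T(t)) can be extended to a bounded holomorphic semigroup: setting C̃ := M²K, there exist universal constants c₁, c₂ > 0 such that the extension satisfies ‖T(z)‖ ≤ c₂ · C̃ · (1 + log C̃) for every z ∈ ℂ∖{0} with |arg z| ≤ c₁/C̃. -/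
open Filter Topology

universe u

/-- A strongly continuous one-parameter semigroup of bounded operators on a complex
Banach space. -/
def IsC0Semigroup {X : Type u} [NormedAddCommGroup X] [NormedSpace ℂ X]
    (T : ℝ → X →L[ℂ] X) : Prop :=
  T 0 = 1 ∧ (∀ s t : ℝ, 0 ≤ s → 0 ≤ t → T (s + t) = (T s).comp (T t)) ∧
    ∀ x : X, Tendsto (fun t => T t x) (nhdsWithin 0 (Set.Ioi 0)) (nhds x)

/-! Let `a = T h`. If `w ≠ 0` lies in the right half plane and `‖1 + w‖ - 1` is small compared
with `‖w‖`, some power `(1 + w) ^ n` is close to `ζ`, so the lower bound for `ζ - a ^ n` turns into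
one for `1 + w - a`; otherwise the Neumann series suffices. Hence `‖w R(w, a - 1)‖ ≤ 128 M K` for
`0 ≤ re w`, and this bound persists, up to a factor `2`, in a sector larger than the half plane by
an angle comparable to `1 / (M K)`. Shifting the contour of the Cauchy integral for
`exp (z (a - 1))` to the boundary of that sector outside the unit disc bounds the exponential on
`|arg z| ≤ 1 / (512 M K)`; the logarithm is the integral of `e^(-r sin δ) / r` along the two rays.
The estimate is invariant under `a - 1 ↦ r (a - 1)` for `r ≥ 0`, so it holds uniformly in `h` for
`exp (z (T h - 1) / h)`, and the extension is the strong limit of these operators as `h ↓ 0`. -/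

section UnitCircle

open Complex

theorem exists_mem_Ioc_exp_mul_I_eq {ζ : ℂ} (hζ : ‖ζ‖ = 1) :
    ∃ θ ∈ Set.Ioc 0 (2 * Real.pi), cexp (θ * I) = ζ := by
  refine ⟨toIocMod Real.two_pi_pos 0 ζ.arg,
    by simpa only [zero_add] using toIocMod_mem_Ioc Real.two_pi_pos 0 ζ.arg, ?_⟩
  have hperiod : ζ.arg - toIocMod Real.two_pi_pos 0 ζ.arg =
      toIocDiv Real.two_pi_pos 0 ζ.arg * (2 * Real.pi) := by
    rw [self_sub_toIocMod, zsmul_eq_mul]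
  calc cexp (toIocMod Real.two_pi_pos 0 ζ.arg * I)
      = cexp (ζ.arg * I) := by
        refine Complex.exp_eq_exp_iff_exists_int.2 ⟨-toIocDiv Real.two_pi_pos 0 ζ.arg, ?_⟩
        rw [← sub_eq_iff_eq_add', ← sub_mul, ← neg_sub, ← ofReal_sub, hperiod]
        push_cast
        ring
    _ = ζ := by simpa only [hζ, ofReal_one, one_mul] using norm_mul_exp_arg_mul_I ζ

theorem exists_nat_norm_exp_mul_I_sub_le_of_pos {ζ : ℂ} (hζ : ‖ζ‖ = 1) {a : ℝ} (ha : 0 < a) :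
    ∃ n : ℕ, 1 ≤ n ∧ n * a ≤ 2 * Real.pi + a ∧ ‖cexp (n * a * I) - ζ‖ ≤ a := by
  obtain ⟨θ, ⟨hθ0, hθ2⟩, rfl⟩ := exists_mem_Ioc_exp_mul_I_eq hζ
  have hlower : θ ≤ ⌈θ / a⌉₊ * a := (div_le_iff₀ ha).1 (Nat.le_ceil _)
  have hupper : ⌈θ / a⌉₊ * a < θ + a := by
    calc ⌈θ / a⌉₊ * a < (θ / a + 1) * a := by gcongr; exact Nat.ceil_lt_add_one (by positivity)
      _ = θ + a := by field_simp
  refine ⟨⌈θ / a⌉₊, Nat.one_le_iff_ne_zero.2 (Nat.ceil_pos.2 (by positivity)).ne',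
    by linarith, ?_⟩
  have hfactor : cexp (⌈θ / a⌉₊ * a * I) - cexp (θ * I) =
      cexp (θ * I) * (cexp (I * (⌈θ / a⌉₊ * a - θ : ℝ)) - 1) := by
    rw [mul_sub, mul_one, ← Complex.exp_add]
    push_cast
    ring_nf
  calc ‖cexp (⌈θ / a⌉₊ * a * I) - cexp (θ * I)‖
      = ‖cexp (I * (⌈θ / a⌉₊ * a - θ : ℝ)) - 1‖ := by
        rw [hfactor, norm_mul, norm_exp_ofReal_mul_I, one_mul]
    _ ≤ ‖⌈θ / a⌉₊ * a - θ‖ := Real.norm_exp_I_mul_ofReal_sub_one_le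
    _ ≤ a := by rw [Real.norm_eq_abs, abs_le]; constructor <;> linarith

theorem exists_nat_norm_exp_mul_I_sub_le {ζ : ℂ} (hζ : ‖ζ‖ = 1) {a : ℝ} (ha : a ≠ 0) :
    ∃ n : ℕ, 1 ≤ n ∧ n * |a| ≤ 2 * Real.pi + |a| ∧ ‖cexp (n * a * I) - ζ‖ ≤ |a| := by
  rcases ha.lt_or_gt with ha | ha
  · obtain ⟨n, hn, hna, hnear⟩ :=
      exists_nat_norm_exp_mul_I_sub_le_of_pos ((RCLike.norm_conj ζ).trans hζ) (neg_pos.2 ha)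
    refine ⟨n, hn, by rwa [abs_of_neg ha], ?_⟩
    rw [abs_of_neg ha, ← RCLike.norm_conj, map_sub, ← exp_conj]
    simpa using hnear
  · simpa only [abs_of_pos ha] using exists_nat_norm_exp_mul_I_sub_le_of_pos hζ ha

theorem norm_pow_sub_le_of_one_le_norm {μ : ℂ} (hμ : 1 ≤ ‖μ‖) (ζ : ℂ) (n : ℕ) :
    ‖μ ^ n - ζ‖ ≤ (‖μ‖ ^ n - 1) + ‖cexp (n * μ.arg * I) - ζ‖ := by
  have hpolar : μ ^ n = (‖μ‖ ^ n : ℝ) * cexp (n * μ.arg * I) := by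
    conv_lhs => rw [← norm_mul_exp_arg_mul_I μ]
    rw [mul_pow, ← Complex.exp_nat_mul]
    push_cast
    ring_nf
  have hsplit : μ ^ n - ζ =
      (‖μ‖ ^ n - 1 : ℝ) * cexp ((n * μ.arg : ℝ) * I) + (cexp (n * μ.arg * I) - ζ) := by
    rw [hpolar]
    push_cast
    ring
  calc ‖μ ^ n - ζ‖
      ≤ ‖((‖μ‖ ^ n - 1 : ℝ) : ℂ) * cexp ((n * μ.arg : ℝ) * I)‖ + ‖cexp (n * μ.arg * I) - ζ‖ := by
        rw [hsplit]; exact norm_add_le _ _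
    _ = (‖μ‖ ^ n - 1) + ‖cexp (n * μ.arg * I) - ζ‖ := by
        rw [norm_mul, norm_exp_ofReal_mul_I, mul_one, norm_real,
          Real.norm_of_nonneg (sub_nonneg.2 (one_le_pow₀ hμ))]

end UnitCircle

section NearOne

open Complex

variable {w : ℂ} {ε : ℝ}

theorem norm_one_add_sq (w : ℂ) : ‖1 + w‖ ^ 2 = 1 + 2 * w.re + ‖w‖ ^ 2 := by
  simp only [Complex.sq_norm, normSq_apply, add_re, one_re, add_im, one_im]
  ring

theorem one_lt_norm_one_add (hw : w ≠ 0) (hre : 0 ≤ w.re) : 1 < ‖1 + w‖ := by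
  have := norm_one_add_sq w
  have : 0 < ‖w‖ ^ 2 := by positivity
  nlinarith [norm_nonneg (1 + w)]

theorem norm_le_of_norm_one_add_sub_one_le (hw : w ≠ 0) (hre : 0 ≤ w.re) (hε : ε ≤ 1 / 64)
    (h : ‖1 + w‖ - 1 ≤ ε * ‖w‖) : ‖w‖ ≤ 3 * ε := by
  have hw0 : 0 < ‖w‖ := norm_pos_iff.2 hw
  have htri : ‖1 + w‖ ≤ 1 + ‖w‖ := by simpa using norm_add_le (1 : ℂ) w
  have hgt := one_lt_norm_one_add hw hre
  have hmul : ‖w‖ * ‖w‖ ≤ ‖w‖ * (ε * (2 + ‖w‖)) :=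
    calc ‖w‖ * ‖w‖ ≤ (‖1 + w‖ - 1) * (‖1 + w‖ + 1) := by nlinarith [norm_one_add_sq w]
      _ ≤ (ε * ‖w‖) * (2 + ‖w‖) := mul_le_mul h (by linarith) (by linarith) (by linarith)
      _ = ‖w‖ * (ε * (2 + ‖w‖)) := by ring
  nlinarith [le_of_mul_le_mul_left hmul hw0]

theorem abs_sin_arg (z : ℂ) : |Real.sin z.arg| = |z.im| / ‖z‖ := by
  rw [sin_arg, abs_div, abs_norm]

theorem norm_div_three_le_abs_arg_one_add (hw : w ≠ 0) (hre : 0 ≤ w.re) (hε : ε ≤ 1 / 64)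
    (h : ‖1 + w‖ - 1 ≤ ε * ‖w‖) : ‖w‖ / 3 ≤ |(1 + w).arg| := by
  have hwε := norm_le_of_norm_one_add_sub_one_le hw hre hε h
  have hre' : w.re ≤ ε * ‖w‖ := by
    have := re_le_norm (1 + w)
    rw [add_re, one_re] at this
    linarith
  have him : ‖w‖ / 2 ≤ |w.im| := by
    refine abs_le_of_sq_le_sq' ?_ (abs_nonneg _) |>.2
    have hsq : ‖w‖ ^ 2 = w.re ^ 2 + w.im ^ 2 := by rw [Complex.sq_norm, normSq_apply]; ring
    have : w.re ≤ ‖w‖ / 64 := by nlinarith [norm_nonneg w]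
    rw [sq_abs]
    nlinarith
  have hden : 0 < ‖1 + w‖ := by
    have := re_le_norm (1 + w)
    rw [add_re, one_re] at this
    linarith
  calc ‖w‖ / 3 ≤ |w.im| / ‖1 + w‖ := by
        rw [le_div_iff₀ hden]
        nlinarith [norm_nonneg w]
    _ = |Real.sin (1 + w).arg| := by rw [abs_sin_arg, add_im, one_im, zero_add]
    _ ≤ |(1 + w).arg| := Real.abs_sin_le_abs

theorem abs_arg_one_add_le (hre : 0 ≤ w.re) : |(1 + w).arg| ≤ 2 * ‖w‖ := by
  have hden : 1 ≤ ‖1 + w‖ := by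
    have := re_le_norm (1 + w)
    rw [add_re, one_re] at this
    linarith
  have harg : |(1 + w).arg| ≤ Real.pi / 2 :=
    abs_arg_le_pi_div_two_iff.2 (by rw [add_re, one_re]; linarith)
  have hjordan : 2 / Real.pi * |(1 + w).arg| ≤ ‖w‖ :=
    calc 2 / Real.pi * |(1 + w).arg| ≤ |Real.sin (1 + w).arg| := Real.mul_abs_le_abs_sin harg
      _ = |w.im| / ‖1 + w‖ := by rw [abs_sin_arg, add_im, one_im, zero_add]
      _ ≤ |w.im| := div_le_self (abs_nonneg _) hden
      _ ≤ ‖w‖ := abs_im_le_norm w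
  rw [div_mul_eq_mul_div, div_le_iff₀ Real.pi_pos] at hjordan
  nlinarith [Real.pi_le_four, norm_nonneg w]

-- Choosing `n` with `n * arg (1 + w)` just past an argument of `ζ` costs an error of at most
-- `|arg (1 + w)| ≤ 6 * ε` in the angle and of at most `exp (20 * ε) - 1` in the modulus.
theorem exists_nat_norm_one_add_pow_sub_le {ζ : ℂ} (hζ : ‖ζ‖ = 1) (hw : w ≠ 0)
    (hre : 0 ≤ w.re) (hε : ε ≤ 1 / 64) (h : ‖1 + w‖ - 1 ≤ ε * ‖w‖) :
    ∃ n : ℕ, 1 ≤ n ∧ ‖(1 + w) ^ n - ζ‖ ≤ 64 * ε ∧ n * ‖1 + w‖ ^ n ≤ 60 / ‖w‖ := by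
  have hw0 : 0 < ‖w‖ := norm_pos_iff.2 hw
  have hwε := norm_le_of_norm_one_add_sub_one_le hw hre hε h
  have harg_lower := norm_div_three_le_abs_arg_one_add hw hre hε h
  have harg_upper := abs_arg_one_add_le hre
  obtain ⟨n, hn, hnarg, hnear⟩ := exists_nat_norm_exp_mul_I_sub_le hζ (a := (1 + w).arg)
    (abs_pos.1 (by linarith))
  have hnw : n * ‖w‖ ≤ 20 := by
    have : n * (‖w‖ / 3) ≤ n * |(1 + w).arg| := by gcongr
    linarith [Real.pi_lt_d2]
  have hpow : ‖1 + w‖ ^ n ≤ Real.exp (20 * ε) :=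
    calc ‖1 + w‖ ^ n ≤ Real.exp (ε * ‖w‖) ^ n := by
          gcongr
          linarith [Real.add_one_le_exp (ε * ‖w‖)]
      _ = Real.exp (n * ‖w‖ * ε) := by rw [← Real.exp_nat_mul]; ring_nf
      _ ≤ Real.exp (20 * ε) := by gcongr; linarith
  have hexp : Real.exp (20 * ε) - 1 ≤ 40 * ε := by
    have hsmall : |20 * ε| ≤ 1 := by rw [abs_le]; constructor <;> linarith
    have := Real.abs_exp_sub_one_le hsmall
    rw [abs_of_nonneg (by linarith : 0 ≤ 20 * ε)] at this
    linarith [le_abs_self (Real.exp (20 * ε) - 1)]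
  refine ⟨n, hn, ?_, ?_⟩
  · have := norm_pow_sub_le_of_one_le_norm (one_lt_norm_one_add hw hre).le ζ n
    linarith
  · rw [le_div_iff₀ hw0]
    calc n * ‖1 + w‖ ^ n * ‖w‖ = n * ‖w‖ * ‖1 + w‖ ^ n := by ring
      _ ≤ 20 * 3 := by gcongr; linarith
      _ = 60 := by norm_num

end NearOne

section PowerBounded

variable {𝔸 : Type*} [NormedRing 𝔸] [NormedAlgebra ℂ 𝔸] {a : 𝔸} {μ : ℂ}

theorem algebraMap_sub_mul_resolvent (hμ : μ ∈ resolventSet ℂ a) :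
    (algebraMap ℂ 𝔸 μ - a) * resolvent a μ = 1 :=
  Ring.mul_inverse_cancel _ hμ

theorem resolvent_mul_algebraMap_sub (hμ : μ ∈ resolventSet ℂ a) :
    resolvent a μ * (algebraMap ℂ 𝔸 μ - a) = 1 :=
  Ring.inverse_mul_cancel _ hμ

theorem mem_resolventSet_and_resolvent_eq {b : 𝔸}
    (hleft : b * (algebraMap ℂ 𝔸 μ - a) = 1) (hright : (algebraMap ℂ 𝔸 μ - a) * b = 1) :
    μ ∈ resolventSet ℂ a ∧ resolvent a μ = b :=
  ⟨⟨⟨_, b, hright, hleft⟩, rfl⟩, Ring.inverse_unit ⟨_, b, hright, hleft⟩⟩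

theorem mem_resolventSet_and_hasSum_resolvent (hμ : μ ≠ 0)
    (hsum : Summable fun n : ℕ => (μ⁻¹ • a) ^ n) :
    μ ∈ resolventSet ℂ a ∧ HasSum (fun n : ℕ => μ⁻¹ ^ (n + 1) • a ^ n) (resolvent a μ) := by
  have hfactor : algebraMap ℂ 𝔸 μ - a = μ • (1 - μ⁻¹ • a) := by
    rw [smul_sub, smul_inv_smul₀ hμ, Algebra.algebraMap_eq_smul_one]
  obtain ⟨hmem, hres⟩ := mem_resolventSet_and_resolvent_eq (μ := μ) (a := a)
    (b := μ⁻¹ • ∑' n : ℕ, (μ⁻¹ • a) ^ n)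
    (by rw [hfactor, smul_mul_smul_comm, hsum.tsum_pow_mul_one_sub, inv_mul_cancel₀ hμ, one_smul])
    (by rw [hfactor, smul_mul_smul_comm, hsum.one_sub_mul_tsum_pow, mul_inv_cancel₀ hμ, one_smul])
  refine ⟨hmem, ?_⟩
  rw [hres]
  simpa only [smul_pow, smul_smul, ← pow_succ'] using hsum.hasSum.const_smul μ⁻¹

variable {M : ℝ}

theorem norm_pow_smul_sub_pow_mul_resolvent_le (ha : ∀ n : ℕ, ‖a ^ n‖ ≤ M) (hμ : 1 ≤ ‖μ‖)
    (hmem : μ ∈ resolventSet ℂ a) (n : ℕ) :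
    ‖μ ^ n • resolvent a μ - a ^ n * resolvent a μ‖ ≤ n * ‖μ‖ ^ n * M := by
  have hgeom : μ ^ n • resolvent a μ - a ^ n * resolvent a μ =
      ∑ i ∈ Finset.range n, μ ^ i • a ^ (n - 1 - i) := by
    have hsum := (Algebra.commute_algebraMap_left μ a).geom_sum₂_mul n
    calc μ ^ n • resolvent a μ - a ^ n * resolvent a μ
        = (algebraMap ℂ 𝔸 μ ^ n - a ^ n) * resolvent a μ := by
          rw [sub_mul, ← map_pow, ← Algebra.smul_def]
      _ = ∑ i ∈ Finset.range n, algebraMap ℂ 𝔸 μ ^ i * a ^ (n - 1 - i) := by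
          rw [← hsum, mul_assoc, algebraMap_sub_mul_resolvent hmem, mul_one]
      _ = ∑ i ∈ Finset.range n, μ ^ i • a ^ (n - 1 - i) := by
          simp only [← map_pow, ← Algebra.smul_def]
  rw [hgeom]
  calc ‖∑ i ∈ Finset.range n, μ ^ i • a ^ (n - 1 - i)‖
      ≤ ∑ _i ∈ Finset.range n, ‖μ‖ ^ n * M := by
        refine norm_sum_le_of_le _ fun i hi => ?_
        rw [norm_smul, norm_pow]
        have hin : i ≤ n := (Finset.mem_range.1 hi).le
        gcongr
        exact ha _
    _ = n * ‖μ‖ ^ n * M := by rw [Finset.sum_const, Finset.card_range, nsmul_eq_mul, mul_assoc]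

/-- The bound `‖λ R(λ, a)‖ ≤ L` for the resolvent of `a` on the closed sector `|arg λ| ≤ φ`
without its vertex. -/
def HasSectorialBound (a : 𝔸) (φ L : ℝ) : Prop :=
  ∀ μ : ℂ, μ ≠ 0 → |μ.arg| ≤ φ → μ ∈ resolventSet ℂ a ∧ ‖μ‖ * ‖resolvent a μ‖ ≤ L

variable [CompleteSpace 𝔸]

theorem mem_resolventSet_and_norm_resolvent_le_of_norm_pow_le (ha : ∀ n : ℕ, ‖a ^ n‖ ≤ M)
    (hμ : 1 < ‖μ‖) : μ ∈ resolventSet ℂ a ∧ (‖μ‖ - 1) * ‖resolvent a μ‖ ≤ M := by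
  have hμ0 : μ ≠ 0 := norm_pos_iff.1 (one_pos.trans hμ)
  have hgeom := (hasSum_geometric_of_lt_one (by positivity) (inv_lt_one_of_one_lt₀ hμ)).mul_left M
  have hle (n : ℕ) : ‖(μ⁻¹ • a) ^ n‖ ≤ M * ‖μ‖⁻¹ ^ n := by
    rw [smul_pow, norm_smul, norm_pow, norm_inv, mul_comm]
    gcongr
    exact ha n
  have hsum : Summable fun n : ℕ => (μ⁻¹ • a) ^ n := .of_norm_bounded hgeom.summable hle
  obtain ⟨hmem, hres⟩ := mem_resolventSet_and_hasSum_resolvent hμ0 hsum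
  have hnorm : ‖resolvent a μ‖ ≤ ‖μ‖⁻¹ * (M * (1 - ‖μ‖⁻¹)⁻¹) := by
    refine hres.norm_le_of_bounded (hgeom.mul_left ‖μ‖⁻¹) fun n => ?_
    calc ‖μ⁻¹ ^ (n + 1) • a ^ n‖ = ‖μ‖⁻¹ * ‖(μ⁻¹ • a) ^ n‖ := by
          rw [pow_succ', mul_smul, ← smul_pow, norm_smul, norm_inv]
      _ ≤ ‖μ‖⁻¹ * (M * ‖μ‖⁻¹ ^ n) := by gcongr; exact hle n
  refine ⟨hmem, ?_⟩
  calc (‖μ‖ - 1) * ‖resolvent a μ‖ ≤ (‖μ‖ - 1) * (‖μ‖⁻¹ * (M * (1 - ‖μ‖⁻¹)⁻¹)) := by gcongr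
    _ = M := by
      have : ‖μ‖ - 1 ≠ 0 := by linarith
      have hinv : 1 - ‖μ‖⁻¹ = (‖μ‖ - 1) / ‖μ‖ := by field_simp
      rw [hinv]
      field_simp

variable {K : ℝ} {ζ : ℂ}

-- Away from the unit circle the Neumann series suffices. Near it, some power `(1 + w) ^ n` is
-- close to `ζ`, and `(1 + w) ^ n - a ^ n` inherits the lower bound of `ζ - a ^ n`.
theorem norm_mul_norm_resolvent_one_add_le (ha : ∀ n : ℕ, ‖a ^ n‖ ≤ M) (hζ : ‖ζ‖ = 1)
    (hK : 1 / 2 ≤ K) (hlow : ∀ n : ℕ, 1 ≤ n → ∀ y : 𝔸, ‖y‖ ≤ K * ‖ζ • y - a ^ n * y‖)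
    {w : ℂ} (hw : w ≠ 0) (hre : 0 ≤ w.re) :
    ‖w‖ * ‖resolvent a (1 + w)‖ ≤ 128 * (M * K) := by
  have hw0 : 0 < ‖w‖ := norm_pos_iff.2 hw
  have hM : 0 ≤ M := (norm_nonneg _).trans (ha 0)
  have hgt := one_lt_norm_one_add hw hre
  obtain ⟨hmem, hneumann⟩ := mem_resolventSet_and_norm_resolvent_le_of_norm_pow_le ha hgt
  set R := resolvent a (1 + w)
  rcases le_total (‖1 + w‖ - 1) (1 / (128 * K) * ‖w‖) with hnear | hfar
  · have hε : 1 / (128 * K) ≤ 1 / 64 := by gcongr; linarith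
    obtain ⟨n, hn, hpow, hnpow⟩ := exists_nat_norm_one_add_pow_sub_le hζ hw hre hε hnear
    have hζR : ‖ζ • R - a ^ n * R‖ ≤ 1 / (2 * K) * ‖R‖ + 60 / ‖w‖ * M :=
      calc ‖ζ • R - a ^ n * R‖
          = ‖((1 + w) ^ n • R - a ^ n * R) - ((1 + w) ^ n - ζ) • R‖ := by rw [sub_smul]; abel_nf
        _ ≤ n * ‖1 + w‖ ^ n * M + ‖(1 + w) ^ n - ζ‖ * ‖R‖ :=
          (norm_sub_le _ _).trans (add_le_add
            (norm_pow_smul_sub_pow_mul_resolvent_le ha hgt.le hmem n) (norm_smul_le _ _))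
        _ ≤ 60 / ‖w‖ * M + 64 * (1 / (128 * K)) * ‖R‖ := by gcongr
        _ = 1 / (2 * K) * ‖R‖ + 60 / ‖w‖ * M := by ring
    have hR : ‖R‖ ≤ ‖R‖ / 2 + 60 * (M * K) / ‖w‖ :=
      calc ‖R‖ ≤ K * (1 / (2 * K) * ‖R‖ + 60 / ‖w‖ * M) := (hlow n hn R).trans (by gcongr)
        _ = ‖R‖ / 2 + 60 * (M * K) / ‖w‖ := by field_simp
    have hR' : ‖w‖ * (‖R‖ / 2) ≤ 60 * (M * K) := by
      rw [← le_div_iff₀' hw0]; linarith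
    nlinarith [mul_nonneg hM (by linarith : 0 ≤ K)]
  · rw [one_div_mul_eq_div, div_le_iff₀ (by positivity)] at hfar
    calc ‖w‖ * ‖R‖ ≤ (‖1 + w‖ - 1) * (128 * K) * ‖R‖ := by gcongr
      _ = 128 * ((‖1 + w‖ - 1) * ‖R‖ * K) := by ring
      _ ≤ 128 * (M * K) := by gcongr

theorem hasSectorialBound_sub_one (ha : ∀ n : ℕ, ‖a ^ n‖ ≤ M) (hζ : ‖ζ‖ = 1) (hK : 1 / 2 ≤ K)
    (hlow : ∀ n : ℕ, 1 ≤ n → ∀ y : 𝔸, ‖y‖ ≤ K * ‖ζ • y - a ^ n * y‖) :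
    HasSectorialBound (a - 1) (Real.pi / 2) (128 * (M * K)) := by
  intro w hw harg
  have hre : 0 ≤ w.re := Complex.abs_arg_le_pi_div_two_iff.1 harg
  have hshift : algebraMap ℂ 𝔸 w - (a - 1) = algebraMap ℂ 𝔸 (1 + w) - a := by
    rw [map_add, map_one]; abel
  rw [spectrum.mem_resolventSet_iff, resolvent, hshift]
  exact ⟨(mem_resolventSet_and_norm_resolvent_le_of_norm_pow_le ha
    (one_lt_norm_one_add hw hre)).1, norm_mul_norm_resolvent_one_add_le ha hζ hK hlow hw hre⟩

end PowerBounded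

section Sector

open Complex

variable {𝔸 : Type*} [NormedRing 𝔸] [NormedAlgebra ℂ 𝔸] {a : 𝔸} {φ δ L : ℝ}

theorem mem_resolventSet_and_norm_resolvent_le_of_norm_sub_mul_le [CompleteSpace 𝔸] {μ₀ μ : ℂ}
    (hμ₀ : μ₀ ∈ resolventSet ℂ a) (h : ‖μ₀ - μ‖ * ‖resolvent a μ₀‖ ≤ 1 / 2) :
    μ ∈ resolventSet ℂ a ∧ ‖resolvent a μ‖ ≤ 2 * ‖resolvent a μ₀‖ := by
  set t := (μ₀ - μ) • resolvent a μ₀ with ht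
  have htle : ‖t‖ ≤ 1 / 2 := (norm_smul_le _ _).trans h
  have hfactor : algebraMap ℂ 𝔸 μ - a = (algebraMap ℂ 𝔸 μ₀ - a) * (1 - t) := by
    rw [mul_sub, mul_one, ht, mul_smul_comm, algebraMap_sub_mul_resolvent hμ₀,
      ← Algebra.algebraMap_eq_smul_one, map_sub]
    abel
  have hμ : μ ∈ resolventSet ℂ a := by
    rw [spectrum.mem_resolventSet_iff, hfactor]
    exact IsUnit.mul hμ₀ (isUnit_one_sub_of_norm_lt_one (by linarith))
  refine ⟨hμ, ?_⟩
  have hidentity : resolvent a μ = resolvent a μ₀ + t * resolvent a μ := by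
    rw [← sub_eq_iff_eq_add, ← one_sub_mul]
    calc (1 - t) * resolvent a μ
        = resolvent a μ₀ * ((algebraMap ℂ 𝔸 μ₀ - a) * (1 - t)) * resolvent a μ := by
          rw [← mul_assoc, resolvent_mul_algebraMap_sub hμ₀, one_mul]
      _ = resolvent a μ₀ := by
          rw [← hfactor, mul_assoc, algebraMap_sub_mul_resolvent hμ, mul_one]
  have hnorm : ‖resolvent a μ‖ ≤ ‖resolvent a μ₀‖ + 1 / 2 * ‖resolvent a μ‖ :=
    calc ‖resolvent a μ‖ ≤ ‖resolvent a μ₀‖ + ‖t * resolvent a μ‖ := by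
          conv_lhs => rw [hidentity]
          exact norm_add_le _ _
      _ ≤ ‖resolvent a μ₀‖ + 1 / 2 * ‖resolvent a μ‖ := by
          gcongr
          exact (norm_mul_le _ _).trans (by gcongr)
  linarith

theorem exists_norm_sub_le_of_abs_arg_le_add (hφ : 0 < φ) (hδ : 0 ≤ δ) {μ : ℂ} (hμ : μ ≠ 0)
    (harg : |μ.arg| ≤ φ + δ) :
    ∃ μ₀ : ℂ, ‖μ₀‖ = ‖μ‖ ∧ |μ₀.arg| ≤ φ ∧ ‖μ₀ - μ‖ ≤ ‖μ‖ * δ := by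
  have hnorm : 0 < ‖μ‖ := norm_pos_iff.2 hμ
  have hsum : 0 < φ + δ := by linarith
  set c := φ / (φ + δ)
  have hc0 : 0 ≤ c := by positivity
  have hc1 : 1 - c = δ / (φ + δ) := by simp only [c]; field_simp; ring
  have hcarg : c * μ.arg ∈ Set.Ioc (-Real.pi) Real.pi := by
    have : 0 ≤ 1 - c := by rw [hc1]; positivity
    have := neg_pi_lt_arg μ
    have := arg_le_pi μ
    constructor <;> nlinarith [Real.pi_pos]
  refine ⟨‖μ‖ * cexp (c * μ.arg * I), ?_, ?_, ?_⟩
  · rw [← ofReal_mul, norm_mul, norm_exp_ofReal_mul_I, mul_one, norm_real, norm_norm]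
  · rw [← ofReal_mul, exp_mul_I, arg_mul_cos_add_sin_mul_I hnorm hcarg, abs_mul, abs_of_nonneg hc0,
      div_mul_eq_mul_div, div_le_iff₀ hsum]
    gcongr
  · have hrotate : ‖μ‖ * cexp (c * μ.arg * I) = μ * cexp (I * (-(1 - c) * μ.arg : ℝ)) :=
      calc ‖μ‖ * cexp (c * μ.arg * I)
          = ‖μ‖ * cexp (μ.arg * I) * cexp (I * (-(1 - c) * μ.arg : ℝ)) := by
            rw [mul_assoc (‖μ‖ : ℂ), ← Complex.exp_add]
            push_cast
            ring_nf
        _ = μ * cexp (I * (-(1 - c) * μ.arg : ℝ)) := by rw [norm_mul_exp_arg_mul_I]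
    rw [hrotate, ← mul_sub_one, norm_mul]
    gcongr
    calc ‖cexp (I * (-(1 - c) * μ.arg : ℝ)) - 1‖ ≤ ‖-(1 - c) * μ.arg‖ :=
          Real.norm_exp_I_mul_ofReal_sub_one_le
      _ = δ / (φ + δ) * |μ.arg| := by
          rw [Real.norm_eq_abs, abs_mul, abs_neg, hc1, abs_of_nonneg (by positivity)]
      _ ≤ δ := by
          rw [div_mul_eq_mul_div, div_le_iff₀ hsum]
          gcongr

theorem HasSectorialBound.enlarge [CompleteSpace 𝔸] (h : HasSectorialBound a φ L) (hφ : 0 < φ)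
    (hδ : 0 ≤ δ) (hδL : δ * L ≤ 1 / 2) : HasSectorialBound a (φ + δ) (2 * L) := by
  intro μ hμ harg
  have hnorm : 0 < ‖μ‖ := norm_pos_iff.2 hμ
  obtain ⟨μ₀, hnorm₀, harg₀, hdist⟩ := exists_norm_sub_le_of_abs_arg_le_add hφ hδ hμ harg
  obtain ⟨hmem₀, hres₀⟩ := h μ₀ (norm_pos_iff.1 (hnorm₀ ▸ hnorm)) harg₀
  rw [hnorm₀] at hres₀
  have hsmall : ‖μ₀ - μ‖ * ‖resolvent a μ₀‖ ≤ 1 / 2 :=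
    calc ‖μ₀ - μ‖ * ‖resolvent a μ₀‖ ≤ ‖μ‖ * δ * ‖resolvent a μ₀‖ := by gcongr
      _ = δ * (‖μ‖ * ‖resolvent a μ₀‖) := by ring
      _ ≤ 1 / 2 := (mul_le_mul_of_nonneg_left hres₀ hδ).trans hδL
  obtain ⟨hmem, hres⟩ := mem_resolventSet_and_norm_resolvent_le_of_norm_sub_mul_le hmem₀ hsmall
  refine ⟨hmem, ?_⟩
  calc ‖μ‖ * ‖resolvent a μ‖ ≤ ‖μ‖ * (2 * ‖resolvent a μ₀‖) := by gcongr
    _ = 2 * (‖μ‖ * ‖resolvent a μ₀‖) := by ring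
    _ ≤ 2 * L := by gcongr

theorem abs_arg_inv_mul_le {z w : ℂ} (hz : z ≠ 0) (hw : w ≠ 0) :
    |(z⁻¹ * w).arg| ≤ |w.arg| + |z.arg| := by
  have := InnerProductGeometry.angle_le_angle_add_angle w 1 z
  rwa [angle_eq_abs_arg hw hz, angle_eq_abs_arg hw one_ne_zero, InnerProductGeometry.angle_comm,
    angle_eq_abs_arg hz one_ne_zero, div_one, div_one, div_eq_inv_mul] at this

theorem HasSectorialBound.smul (h : HasSectorialBound a (φ + δ) L) {z : ℂ} (hz : z ≠ 0)
    (hzδ : |z.arg| ≤ δ) : HasSectorialBound (z • a) φ L := by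
  intro μ hμ harg
  obtain ⟨hmem, hres⟩ := h (z⁻¹ * μ) (mul_ne_zero (inv_ne_zero hz) hμ)
    ((abs_arg_inv_mul_le hz hμ).trans (add_le_add harg hzδ))
  have hfactor : algebraMap ℂ 𝔸 μ - z • a = z • (algebraMap ℂ 𝔸 (z⁻¹ * μ) - a) := by
    simp only [smul_sub, Algebra.algebraMap_eq_smul_one, smul_smul, mul_inv_cancel_left₀ hz]
  obtain ⟨hmem', hresolvent⟩ := mem_resolventSet_and_resolvent_eq (μ := μ) (a := z • a)
    (b := z⁻¹ • resolvent a (z⁻¹ * μ))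
    (by rw [hfactor, smul_mul_smul_comm, resolvent_mul_algebraMap_sub hmem, inv_mul_cancel₀ hz,
      one_smul])
    (by rw [hfactor, smul_mul_smul_comm, algebraMap_sub_mul_resolvent hmem, mul_inv_cancel₀ hz,
      one_smul])
  refine ⟨hmem', ?_⟩
  rw [hresolvent, norm_smul]
  calc ‖μ‖ * (‖z⁻¹‖ * ‖resolvent a (z⁻¹ * μ)‖) = ‖z⁻¹ * μ‖ * ‖resolvent a (z⁻¹ * μ)‖ := by
        rw [norm_mul]; ring
    _ ≤ L := hres

end Sector

section Contour

open Complex MeasureTheory Bornology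

variable {𝔸 : Type*} [NormedRing 𝔸] [NormedAlgebra ℂ 𝔸]

theorem circleIntegral_exp_mul_inv_pow {R : ℝ} (hR : 0 < R) (n : ℕ) :
    ∮ z in C(0, R), cexp z * z⁻¹ ^ (n + 1) = 2 * Real.pi * I * (n.factorial : ℂ)⁻¹ := by
  have h := Complex.differentiable_exp.differentiableOn.circleIntegral_one_div_sub_center_pow_smul
    (c := 0) hR n
  simp only [iteratedDeriv_eq_iterate, Complex.iter_deriv_exp, Complex.exp_zero, sub_zero,
    smul_eq_mul, mul_one, one_div, ← inv_pow] at h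
  simpa only [mul_comm (cexp _), div_eq_mul_inv] using h

theorem circleIntegral_exp_smul_resolvent [CompleteSpace 𝔸] {b : 𝔸} {R : ℝ} (hR : ‖b‖ < R) :
    ∮ z in C(0, R), cexp z • resolvent b z = (2 * Real.pi * I) • NormedSpace.exp b := by
  have hR0 : 0 < R := (norm_nonneg b).trans_lt hR
  have hnorm (θ : ℝ) : ‖circleMap 0 R θ‖ = R := by rw [norm_circleMap_zero, abs_of_pos hR0]
  have hne (θ : ℝ) : circleMap 0 R θ ≠ 0 := circleMap_ne_center hR0.ne'
  have hgeom {z : ℂ} (hz : ‖z‖ = R) : Summable fun n : ℕ => ‖(z⁻¹ • b) ^ n‖ := by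
    refine summable_norm_geometric_of_norm_lt_one ?_
    rwa [norm_smul, norm_inv, hz, inv_mul_lt_iff₀ hR0, mul_one]
  have hsum : HasSum (fun n : ℕ => ∮ z in C(0, R), (cexp z * z⁻¹ ^ (n + 1)) • b ^ n)
      (∮ z in C(0, R), cexp z • resolvent b z) := by
    refine intervalIntegral.hasSum_integral_of_dominated_convergence
      (fun n _ => Real.exp R * ‖(((R : ℂ)⁻¹ • b) ^ n)‖) (fun n => ?_) (fun n => ?_) ?_ ?_ ?_
    · have : Continuous fun θ : ℝ => (circleMap 0 R θ)⁻¹ := (continuous_circleMap 0 R).inv₀ hne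
      simp only [deriv_circleMap]
      fun_prop
    · refine Eventually.of_forall fun θ _ => ?_
      have hexp : ‖cexp (circleMap 0 R θ)‖ ≤ Real.exp R := by
        rw [norm_exp]
        exact Real.exp_le_exp.2 ((re_le_norm _).trans (hnorm θ).le)
      rw [deriv_circleMap, norm_smul, norm_mul, norm_I, mul_one, norm_smul, norm_mul, smul_pow,
        norm_smul, norm_pow (circleMap 0 R θ)⁻¹, norm_pow (R : ℂ)⁻¹, norm_inv, norm_inv, hnorm,
        norm_real, Real.norm_of_nonneg hR0.le]
      calc R * (‖cexp (circleMap 0 R θ)‖ * R⁻¹ ^ (n + 1) * ‖b ^ n‖)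
          = ‖cexp (circleMap 0 R θ)‖ * (R⁻¹ ^ n * ‖b ^ n‖) := by
            rw [pow_succ]
            field_simp
        _ ≤ Real.exp R * (R⁻¹ ^ n * ‖b ^ n‖) := by gcongr
    · refine Eventually.of_forall fun θ _ => (hgeom ?_).mul_left _
      rw [norm_real, Real.norm_of_nonneg hR0.le]
    · exact intervalIntegrable_const
    · refine Eventually.of_forall fun θ _ => HasSum.const_smul _ ?_
      have hres := (mem_resolventSet_and_hasSum_resolvent (hne θ) (hgeom (hnorm θ)).of_norm).2
      simpa only [smul_smul] using hres.const_smul (cexp (circleMap 0 R θ))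
  refine hsum.unique ?_
  convert (NormedSpace.exp_series_hasSum_exp' (𝕂 := ℂ) b).const_smul (2 * Real.pi * I) using 2
    with n
  rw [circleIntegral.integral_smul_const, circleIntegral_exp_mul_inv_pow hR0, smul_smul]

/-- The integrand of `exp b = (2πi)⁻¹ ∮ e^λ R(λ, b) dλ` in the coordinate `λ = e^w`, in which
sectors become horizontal strips. -/
noncomputable def logResolventIntegrand (b : 𝔸) (w : ℂ) : 𝔸 :=
  (cexp (cexp w) * cexp w) • resolvent b (cexp w)

theorem norm_logResolventIntegrand (b : 𝔸) (u θ : ℝ) :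
    ‖logResolventIntegrand b (u + θ * I)‖ = Real.exp (Real.exp u * Real.cos θ) *
      (‖cexp (u + θ * I)‖ * ‖resolvent b (cexp (u + θ * I))‖) := by
  rw [logResolventIntegrand, norm_smul, norm_mul, norm_exp (cexp _), exp_re, mul_assoc]
  simp only [add_re, ofReal_re, mul_re, I_re, mul_zero, ofReal_im, I_im, mul_one, sub_self,
    add_zero, add_im, mul_im, zero_add]

theorem differentiableAt_logResolventIntegrand [CompleteSpace 𝔸] {b : 𝔸} {w : ℂ}
    (h : cexp w ∈ resolventSet ℂ b) :
    DifferentiableAt ℂ (logResolventIntegrand b) w := by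
  have hres := (spectrum.hasDerivAt_resolvent_const_left h).scomp w (Complex.hasDerivAt_exp w)
  have hexp : DifferentiableAt ℂ (fun w => cexp (cexp w) * cexp w) w := by fun_prop
  exact hexp.smul hres.differentiableAt

theorem integral_logResolventIntegrand [CompleteSpace 𝔸] {b : 𝔸} {V : ℝ} (hV : ‖b‖ < Real.exp V) :
    ∫ θ in (-Real.pi)..Real.pi, logResolventIntegrand b (V + θ * I) =
      (2 * Real.pi : ℂ) • NormedSpace.exp b := by
  have hcircle (θ : ℝ) : circleMap 0 (Real.exp V) θ = cexp (V + θ * I) := by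
    rw [circleMap_zero, Complex.exp_add, ofReal_exp]
  have hperiodic : Function.Periodic (fun θ : ℝ => logResolventIntegrand b (V + θ * I))
      (2 * Real.pi) := fun θ => by
    simp only [logResolventIntegrand, ← hcircle, periodic_circleMap 0 (Real.exp V) θ]
  have hshift := hperiodic.intervalIntegral_add_eq (-Real.pi) 0
  rw [zero_add, neg_add_eq_sub, two_mul, add_sub_cancel_right, ← two_mul] at hshift
  have hintegral := circleIntegral_exp_smul_resolvent hV
  simp only [circleIntegral, deriv_circleMap, hcircle, smul_smul] at hintegral
  have hI : I • ∫ θ in (0 : ℝ)..2 * Real.pi, logResolventIntegrand b (V + θ * I) =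
      I • (2 * Real.pi : ℂ) • NormedSpace.exp b := by
    rw [← intervalIntegral.integral_smul, smul_smul, mul_comm I, ← hintegral]
    refine intervalIntegral.integral_congr fun θ _ => ?_
    simp only [logResolventIntegrand, smul_smul]
    ring_nf
  rw [hshift, smul_right_injective 𝔸 I_ne_zero hI]

theorem integral_exp_neg_mul_exp_le {s V : ℝ} (hs : 0 < s) (hV : 0 ≤ V) :
    ∫ u in (0 : ℝ)..V, Real.exp (-(s * Real.exp u)) ≤ Real.log ((1 + s) / s) := by
  have hcont : Continuous fun u : ℝ => (1 + s * Real.exp u)⁻¹ :=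
    Continuous.inv₀ (by fun_prop) fun u => by positivity
  have hderiv (u : ℝ) : HasDerivAt (fun u => u - Real.log (1 + s * Real.exp u))
      (1 + s * Real.exp u)⁻¹ u := by
    have hpos : 0 < 1 + s * Real.exp u := by positivity
    have := (hasDerivAt_id u).sub
      (((Real.hasDerivAt_exp u).const_mul s).const_add 1 |>.log hpos.ne')
    rwa [show 1 - s * Real.exp u / (1 + s * Real.exp u) = (1 + s * Real.exp u)⁻¹ by
      field_simp; ring] at this
  have hlog : V + Real.log s ≤ Real.log (1 + s * Real.exp V) :=
    calc V + Real.log s = Real.log (s * Real.exp V) := by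
          rw [Real.log_mul hs.ne' (Real.exp_pos V).ne', Real.log_exp, add_comm]
      _ ≤ Real.log (1 + s * Real.exp V) := Real.log_le_log (by positivity) (by linarith)
  calc ∫ u in (0 : ℝ)..V, Real.exp (-(s * Real.exp u))
      ≤ ∫ u in (0 : ℝ)..V, (1 + s * Real.exp u)⁻¹ := by
        refine intervalIntegral.integral_mono_on hV
          (Continuous.intervalIntegrable (by fun_prop) _ _) (hcont.intervalIntegrable _ _)
          fun u _ => ?_
        rw [Real.exp_neg]
        exact inv_anti₀ (by positivity) (by linarith [Real.add_one_le_exp (s * Real.exp u)])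
    _ = V - Real.log (1 + s * Real.exp V) - (0 - Real.log (1 + s * Real.exp 0)) :=
        intervalIntegral.integral_eq_sub_of_hasDerivAt (fun u _ => hderiv u)
          (hcont.intervalIntegrable _ _)
    _ ≤ Real.log ((1 + s) / s) := by
        rw [Real.log_div (by positivity) hs.ne', Real.exp_zero, mul_one]
        linarith

theorem exists_forall_norm_mul_norm_resolvent_le [CompleteSpace 𝔸] (b : 𝔸) :
    ∃ C r : ℝ, ∀ μ : ℂ, r ≤ ‖μ‖ → ‖μ‖ * ‖resolvent b μ‖ ≤ C := by
  obtain ⟨C, hC⟩ := (spectrum.resolvent_isBigO_inv (𝕜 := ℂ) b).bound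
  obtain ⟨r, -, hr⟩ := hasBasis_cobounded_norm.eventually_iff.1 hC
  refine ⟨C, max r 1, fun μ hμ => ?_⟩
  have hpos : 0 < ‖μ‖ := one_pos.trans_le ((le_max_right r 1).trans hμ)
  have hle := hr ((le_max_left r 1).trans hμ)
  rwa [norm_inv, ← div_eq_mul_inv, le_div_iff₀' hpos] at hle

theorem tendsto_integral_logResolventIntegrand_of_cos_le [CompleteSpace 𝔸] (b : 𝔸) {s x y : ℝ}
    (hs : 0 < s) (hxy : x ≤ y) (hcos : ∀ θ ∈ Set.Icc x y, Real.cos θ ≤ -s) :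
    Tendsto (fun V : ℝ => ∫ θ in x..y, logResolventIntegrand b (V + θ * I)) atTop (𝓝 0) := by
  obtain ⟨C, r, hC⟩ := exists_forall_norm_mul_norm_resolvent_le b
  have hbound : ∀ᶠ V : ℝ in atTop, ‖∫ θ in x..y, logResolventIntegrand b (V + θ * I)‖ ≤
      Real.exp (-(s * Real.exp V)) * C * |y - x| := by
    filter_upwards [Real.tendsto_exp_atTop.eventually_ge_atTop r] with V hV
    refine intervalIntegral.norm_integral_le_of_norm_le_const fun θ hθ => ?_
    rw [Set.uIoc_of_le hxy] at hθ
    rw [norm_logResolventIntegrand]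
    have := hcos θ (Set.Ioc_subset_Icc_self hθ)
    gcongr
    · nlinarith [Real.exp_pos V]
    · exact hC _ (by simpa [norm_exp] using hV)
  refine squeeze_zero_norm' hbound ?_
  have hlim : Tendsto (fun V : ℝ => Real.exp (-(s * Real.exp V))) atTop (𝓝 0) :=
    Real.tendsto_exp_neg_atTop_nhds_zero.comp (Real.tendsto_exp_atTop.const_mul_atTop hs)
  simpa using (hlim.mul_const C).mul_const |y - x|

theorem continuous_logResolventIntegrand [CompleteSpace 𝔸] {b : 𝔸} {V : ℝ}
    (hV : ‖b‖ < Real.exp V) : Continuous fun θ : ℝ => logResolventIntegrand b (V + θ * I) := by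
  refine continuous_iff_continuousAt.2 fun θ => ?_
  have hnorm : ‖cexp (V + θ * I)‖ = Real.exp V := by
    rw [norm_exp, add_re, re_ofReal_mul, I_re, mul_zero, add_zero, ofReal_re]
  have hgeom : Summable fun n : ℕ => ‖((cexp (V + θ * I))⁻¹ • b) ^ n‖ := by
    refine summable_norm_geometric_of_norm_lt_one ?_
    rwa [norm_smul, norm_inv, hnorm, inv_mul_lt_iff₀ (Real.exp_pos V), mul_one]
  have hmem := (mem_resolventSet_and_hasSum_resolvent (exp_ne_zero _) hgeom.of_norm).1
  exact (differentiableAt_logResolventIntegrand hmem).continuousAt.comp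
    (f := fun θ : ℝ => (V + θ * I : ℂ)) (by fun_prop)

theorem tendsto_integral_logResolventIntegrand [CompleteSpace 𝔸] (b : 𝔸) {α : ℝ}
    (hα : Real.pi / 2 < α) (hα' : α ≤ Real.pi) :
    Tendsto (fun V : ℝ => ∫ θ in (-α)..α, logResolventIntegrand b (V + θ * I)) atTop
      (𝓝 ((2 * Real.pi : ℂ) • NormedSpace.exp b)) := by
  have hs : 0 < -Real.cos α := by
    linarith [Real.cos_neg_of_pi_div_two_lt_of_lt hα (by linarith [Real.pi_pos])]
  have hα0 : 0 < α := Real.pi_div_two_pos.trans hα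
  have hcos {θ : ℝ} (hθ : α ≤ |θ|) (hθ' : |θ| ≤ Real.pi) : Real.cos θ ≤ - -Real.cos α := by
    rw [neg_neg, ← Real.cos_abs θ]
    exact Real.cos_le_cos_of_nonneg_of_le_pi hα0.le hθ' hθ
  have hleft := tendsto_integral_logResolventIntegrand_of_cos_le b hs (neg_le_neg hα') fun θ hθ =>
    hcos (le_abs.2 (.inr (by linarith [hθ.2]))) (abs_le.2 ⟨hθ.1, by linarith [hθ.2]⟩)
  have hright := tendsto_integral_logResolventIntegrand_of_cos_le b hs hα' fun θ hθ =>
    hcos (le_abs.2 (.inl hθ.1)) (abs_le.2 ⟨by linarith [hθ.1], hθ.2⟩)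
  have hlim := (tendsto_const_nhds (x := (2 * Real.pi : ℂ) • NormedSpace.exp b)).sub
    (hleft.add hright)
  rw [add_zero, sub_zero] at hlim
  refine hlim.congr' ?_
  filter_upwards [Real.tendsto_exp_atTop.eventually_gt_atTop ‖b‖] with V hV
  have hint (x y : ℝ) : IntervalIntegrable (fun θ : ℝ => logResolventIntegrand b (V + θ * I))
      volume x y := (continuous_logResolventIntegrand hV).intervalIntegrable x y
  rw [← integral_logResolventIntegrand hV,
    ← intervalIntegral.integral_add_adjacent_intervals (hint (-Real.pi) (-α)) (hint (-α) Real.pi),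
    ← intervalIntegral.integral_add_adjacent_intervals (hint (-α) α) (hint α Real.pi)]
  abel

variable {b : 𝔸} {α L : ℝ}

theorem HasSectorialBound.mem_resolventSet_and_norm_cexp_mul_norm_resolvent_le
    (h : HasSectorialBound b α L) (hα : α < Real.pi) {w : ℂ} (hw : |w.im| ≤ α) :
    cexp w ∈ resolventSet ℂ b ∧ ‖cexp w‖ * ‖resolvent b (cexp w)‖ ≤ L := by
  have hw' := abs_le.1 hw
  refine h _ (exp_ne_zero w) ?_
  rwa [arg_exp, (toIocMod_eq_self _).2 ⟨by linarith, by linarith⟩]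

theorem HasSectorialBound.norm_logResolventIntegrand_le (h : HasSectorialBound b α L)
    (hα : α < Real.pi) {u θ : ℝ} (hθ : |θ| ≤ α) :
    ‖logResolventIntegrand b (u + θ * I)‖ ≤ L * Real.exp (Real.exp u * Real.cos θ) := by
  rw [norm_logResolventIntegrand, mul_comm]
  gcongr
  exact (h.mem_resolventSet_and_norm_cexp_mul_norm_resolvent_le hα (w := u + θ * I)
    (by simpa using hθ)).2

theorem HasSectorialBound.nonneg (h : HasSectorialBound b α L) (hα : 0 ≤ α) : 0 ≤ L :=
  (by positivity : 0 ≤ ‖(1 : ℂ)‖ * ‖resolvent b (1 : ℂ)‖).trans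
    (h 1 one_ne_zero (by simpa using hα)).2

theorem HasSectorialBound.norm_integral_ray_le (h : HasSectorialBound b α L) (hα : α < Real.pi)
    {V θ : ℝ} (hV : 0 ≤ V) (hθ : |θ| ≤ α) (hcos : Real.cos θ < 0) :
    ‖∫ u in (0 : ℝ)..V, logResolventIntegrand b (u + θ * I)‖ ≤
      L * Real.log ((1 - Real.cos θ) / -Real.cos θ) :=
  calc ‖∫ u in (0 : ℝ)..V, logResolventIntegrand b (u + θ * I)‖
      ≤ ∫ u in (0 : ℝ)..V, L * Real.exp (-(-Real.cos θ * Real.exp u)) := by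
        refine intervalIntegral.norm_integral_le_of_norm_le hV (Eventually.of_forall fun u _ => ?_)
          (Continuous.intervalIntegrable (by fun_prop) _ _)
        convert h.norm_logResolventIntegrand_le hα hθ using 3
        ring
    _ = L * ∫ u in (0 : ℝ)..V, Real.exp (-(-Real.cos θ * Real.exp u)) :=
        intervalIntegral.integral_const_mul _ _
    _ ≤ L * Real.log ((1 - Real.cos θ) / -Real.cos θ) := by
        have := h.nonneg ((abs_nonneg θ).trans hθ)
        gcongr
        exact integral_exp_neg_mul_exp_le (neg_pos.2 hcos) hV

theorem HasSectorialBound.norm_integral_unit_arc_le (h : HasSectorialBound b α L) (hα0 : 0 ≤ α)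
    (hα : α < Real.pi) :
    ‖∫ θ in (-α)..α, logResolventIntegrand b ((0 : ℝ) + θ * I)‖ ≤ 2 * α * (L * Real.exp 1) := by
  have hL := h.nonneg hα0
  have hbound : ∀ θ ∈ Set.uIoc (-α) α,
      ‖logResolventIntegrand b ((0 : ℝ) + θ * I)‖ ≤ L * Real.exp 1 := fun θ hθ => by
    rw [Set.uIoc_of_le (by linarith)] at hθ
    refine (h.norm_logResolventIntegrand_le hα (abs_le.2 ⟨hθ.1.le, hθ.2⟩)).trans ?_
    rw [Real.exp_zero, one_mul]
    gcongr
    exact Real.cos_le_one θ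
  have := intervalIntegral.norm_integral_le_of_norm_le_const hbound
  rwa [sub_neg_eq_add, ← two_mul, abs_of_nonneg (by positivity), mul_comm] at this

theorem HasSectorialBound.norm_integral_arc_le [CompleteSpace 𝔸] (h : HasSectorialBound b α L)
    (hα : Real.pi / 2 < α) (hα' : α < Real.pi) {V : ℝ} (hV : 0 ≤ V) :
    ‖∫ θ in (-α)..α, logResolventIntegrand b (V + θ * I)‖ ≤
      2 * α * (L * Real.exp 1) + 2 * (L * Real.log ((1 - Real.cos α) / -Real.cos α)) := by
  have hα0 : 0 < α := Real.pi_div_two_pos.trans hα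
  have hcos : Real.cos α < 0 :=
    Real.cos_neg_of_pi_div_two_lt_of_lt hα (by linarith [Real.pi_pos])
  have hdiff : DifferentiableOn ℂ (logResolventIntegrand b)
      (Set.uIcc 0 V ×ℂ Set.uIcc (-α) α) := fun w hw => by
    rw [mem_reProdIm, Set.uIcc_of_le (by linarith : -α ≤ α)] at hw
    exact (differentiableAt_logResolventIntegrand
      (h.mem_resolventSet_and_norm_cexp_mul_norm_resolvent_le hα' (abs_le.2 hw.2)).1
      ).differentiableWithinAt
  have hrect := integral_boundary_rect_eq_zero_of_differentiableOn (logResolventIntegrand b)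
    ((0 : ℝ) + (-α : ℝ) * I) (V + α * I) (by simpa using hdiff)
  simp only [add_re, mul_re, ofReal_re, I_re, mul_zero, ofReal_im, I_im, add_zero, add_im, mul_im,
    mul_one, zero_add, sub_self] at hrect
  have hlower := h.norm_integral_ray_le hα' hV (θ := -α) (by rw [abs_neg, abs_of_pos hα0])
    (by rwa [Real.cos_neg])
  have hupper := h.norm_integral_ray_le hα' hV (θ := α) (abs_of_pos hα0).le hcos
  rw [Real.cos_neg] at hlower
  calc ‖∫ θ in (-α)..α, logResolventIntegrand b (V + θ * I)‖
      = ‖I • ∫ θ in (-α)..α, logResolventIntegrand b (V + θ * I)‖ := by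
        rw [norm_smul, norm_I, one_mul]
    _ = ‖(I • ∫ θ in (-α)..α, logResolventIntegrand b ((0 : ℝ) + θ * I))
          - (∫ u in (0 : ℝ)..V, logResolventIntegrand b (u + (-α : ℝ) * I))
          + ∫ u in (0 : ℝ)..V, logResolventIntegrand b (u + α * I)‖ := by
        congr 1
        rw [← sub_eq_zero, ← hrect]
        abel
    _ ≤ ‖∫ θ in (-α)..α, logResolventIntegrand b ((0 : ℝ) + θ * I)‖
          + ‖∫ u in (0 : ℝ)..V, logResolventIntegrand b (u + (-α : ℝ) * I)‖
          + ‖∫ u in (0 : ℝ)..V, logResolventIntegrand b (u + α * I)‖ := by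
        refine (norm_add_le _ _).trans (add_le_add_left ((norm_sub_le _ _).trans ?_) _)
        rw [norm_smul, norm_I, one_mul]
    _ ≤ 2 * α * (L * Real.exp 1) + 2 * (L * Real.log ((1 - Real.cos α) / -Real.cos α)) := by
        linarith [h.norm_integral_unit_arc_le hα0.le hα']

theorem HasSectorialBound.norm_exp_le [CompleteSpace 𝔸] {δ : ℝ}
    (h : HasSectorialBound b (Real.pi / 2 + δ) L) (hδ : 0 < δ) (hδ' : δ < Real.pi / 2) :
    ‖NormedSpace.exp b‖ ≤ L * (3 + Real.log ((1 + Real.sin δ) / Real.sin δ)) := by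
  set α := Real.pi / 2 + δ with hα
  have hL := h.nonneg (by positivity)
  have hsin : 0 < Real.sin δ := Real.sin_pos_of_pos_of_lt_pi hδ (by linarith)
  have hcos : Real.cos α = -Real.sin δ := by rw [hα, add_comm, Real.cos_add_pi_div_two]
  have hlog : 0 ≤ Real.log ((1 + Real.sin δ) / Real.sin δ) :=
    Real.log_nonneg ((one_le_div hsin).2 (by linarith))
  have hle := le_of_tendsto (tendsto_integral_logResolventIntegrand b
      (by linarith : Real.pi / 2 < α) (by linarith)).norm
    ((eventually_ge_atTop 0).mono fun V hV => h.norm_integral_arc_le (by linarith) (by linarith) hV)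
  rw [hcos, sub_neg_eq_add, neg_neg, norm_smul, norm_mul, norm_ofNat, norm_real,
    Real.norm_of_nonneg Real.pi_pos.le] at hle
  refine le_of_mul_le_mul_left (hle.trans ?_) Real.two_pi_pos
  calc 2 * α * (L * Real.exp 1) + 2 * (L * Real.log ((1 + Real.sin δ) / Real.sin δ))
      ≤ 2 * Real.pi * (L * 3) + 2 * Real.pi * (L * Real.log ((1 + Real.sin δ) / Real.sin δ)) := by
        have := Real.exp_one_lt_three
        have := Real.pi_gt_three
        gcongr <;> linarith
    _ = 2 * Real.pi * (L * (3 + Real.log ((1 + Real.sin δ) / Real.sin δ))) := by ring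

end Contour

section ExpBound

variable {𝔸 : Type*} [NormedRing 𝔸] [NormedAlgebra ℂ 𝔸] {a : 𝔸} {C K L M δ : ℝ} {ζ : ℂ}

/-- Boundedness by `B` of the semigroup `z ↦ exp (z a)` on the closed sector `|arg z| ≤ δ`, vertex
included. -/
def HasExpBoundOnSector (a : 𝔸) (δ B : ℝ) : Prop :=
  ∀ z : ℂ, |z.arg| ≤ δ → ‖NormedSpace.exp (z • a)‖ ≤ B

theorem HasSectorialBound.norm_exp_smul_le [CompleteSpace 𝔸]
    (h : HasSectorialBound a (Real.pi / 2) L) (hδ : 0 < δ) (hδ' : δ < Real.pi / 2)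
    (hδL : 2 * δ * L ≤ 1 / 2) {z : ℂ} (hz : z ≠ 0) (harg : |z.arg| ≤ δ) :
    ‖NormedSpace.exp (z • a)‖ ≤ 2 * L * (3 + Real.log ((1 + Real.sin δ) / Real.sin δ)) := by
  have henlarged := h.enlarge Real.pi_div_two_pos (by positivity) hδL
  rw [two_mul δ, ← add_assoc] at henlarged
  exact (henlarged.smul hz harg).norm_exp_le hδ hδ'

theorem log_one_add_sin_div_sin_le (hC : 1 / 2 ≤ C) :
    Real.log ((1 + Real.sin (1 / 512 / C)) / Real.sin (1 / 512 / C)) ≤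
      11 * Real.log 2 + Real.log C := by
  have hC0 : 0 < C := by linarith
  set δ := 1 / 512 / C with hδ
  have hδ0 : 0 < δ := by positivity
  have hδ1 : δ ≤ 1 := by rw [hδ, div_le_iff₀ hC0]; linarith
  have hsin : δ / 2 ≤ Real.sin δ :=
    calc δ / 2 = 2 / 4 * δ := by ring
      _ ≤ 2 / Real.pi * δ := by gcongr; exact Real.pi_lt_four.le
      _ ≤ Real.sin δ := Real.mul_le_sin hδ0.le (by linarith [Real.pi_gt_three])
  have hsin0 : 0 < Real.sin δ := by linarith
  calc Real.log ((1 + Real.sin δ) / Real.sin δ) ≤ Real.log (2 / (δ / 2)) := by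
        gcongr
        linarith [Real.sin_le_one δ]
    _ = Real.log (2 ^ 11 * C) := by
        congr 1
        rw [hδ]
        field_simp
        norm_num
    _ = 11 * Real.log 2 + Real.log C := by
        rw [Real.log_mul (by norm_num) hC0.ne', Real.log_pow, Nat.cast_ofNat]

theorem neg_log_two_le_log (hC : 1 / 2 ≤ C) : -Real.log 2 ≤ Real.log C := by
  rw [← Real.log_inv, ← one_div]
  exact Real.log_le_log (by norm_num) hC

theorem hasExpBoundOnSector_sub_one [CompleteSpace 𝔸] (hM : 1 ≤ M) (ha : ∀ n : ℕ, ‖a ^ n‖ ≤ M)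
    (hζ : ‖ζ‖ = 1) (hK : 1 / 2 ≤ K)
    (hlow : ∀ n : ℕ, 1 ≤ n → ∀ y : 𝔸, ‖y‖ ≤ K * ‖ζ • y - a ^ n * y‖) :
    HasExpBoundOnSector (a - 1) (1 / 512 / (M * K)) (10240 * (M * K) * (1 + Real.log (M * K))) := by
  intro z hz
  have hMK : M * (1 / 2) ≤ M * K := by gcongr
  have hC : 1 / 2 ≤ M * K := by linarith
  set C := M * K with hC_def
  have hlog := neg_log_two_le_log hC
  have := Real.log_two_lt_d9
  rcases eq_or_ne z 0 with rfl | hz0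
  · rw [zero_smul, NormedSpace.exp_zero]
    calc ‖(1 : 𝔸)‖ ≤ M := by simpa using ha 0
      _ ≤ 10240 * C * (1 + Real.log C) := by nlinarith
  have hδ : 1 / 512 / C < Real.pi / 2 := by
    rw [div_lt_iff₀ (by positivity)]
    nlinarith [Real.pi_gt_three]
  calc ‖NormedSpace.exp (z • (a - 1))‖
      ≤ 2 * (128 * C) * (3 + Real.log ((1 + Real.sin (1 / 512 / C)) / Real.sin (1 / 512 / C))) :=
        (hasSectorialBound_sub_one ha hζ hK hlow).norm_exp_smul_le (by positivity) hδ
          (by rw [← hC_def]; field_simp; norm_num) hz0 hz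
    _ ≤ 2 * (128 * C) * (3 + (11 * Real.log 2 + Real.log C)) := by
        gcongr
        exact log_one_add_sin_div_sin_le hC
    _ ≤ 10240 * C * (1 + Real.log C) := by nlinarith

theorem mul_one_add_log_le_mul_one_add_log {C' : ℝ} (hC : 1 / 2 ≤ C) (hCC' : C ≤ C') :
    C * (1 + Real.log C) ≤ C' * (1 + Real.log C') := by
  have hlog := neg_log_two_le_log hC
  have := Real.log_two_lt_d9
  have : 0 ≤ C' := by linarith
  gcongr
  linarith

end ExpBound

section C0Semigroup

open MeasureTheory

variable {X : Type u} [NormedAddCommGroup X] [NormedSpace ℂ X]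
  {T U : ℝ → X →L[ℂ] X} {M N : ℝ} {x y z : X}

theorem IsC0Semigroup.pow_eq (hT : IsC0Semigroup T) {h : ℝ} (hh : 0 ≤ h) (n : ℕ) :
    T h ^ n = T (n * h) := by
  induction n with
  | zero => rw [pow_zero, Nat.cast_zero, zero_mul, hT.1]
  | succ n ih =>
    rw [pow_succ, ih, Nat.cast_succ, add_one_mul, hT.2.1 _ _ (by positivity) hh]
    rfl

theorem IsC0Semigroup.apply_div_pow (hT : IsC0Semigroup T) {t : ℝ} (ht : 0 ≤ t) {k : ℕ}
    (hk : k ≠ 0) : T (t / k) ^ k = T t := by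
  rw [hT.pow_eq (by positivity), mul_div_cancel₀ t (Nat.cast_ne_zero.2 hk)]

theorem IsC0Semigroup.commute (hT : IsC0Semigroup T) {s t : ℝ} (hs : 0 ≤ s) (ht : 0 ≤ t) :
    Commute (T s) (T t) :=
  calc T s * T t = T (s + t) := (hT.2.1 s t hs ht).symm
    _ = T t * T s := by rw [add_comm, hT.2.1 t s ht hs]; rfl

/-- The vector `x` lies in the domain of the generator of `T`, which sends it to `y`. -/
def HasGeneratorValue (T : ℝ → X →L[ℂ] X) (x y : X) : Prop :=
  HasDerivWithinAt (fun t => T t x) y (Set.Ici 0) 0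

theorem HasGeneratorValue.tendsto_natCast_smul (hx : HasGeneratorValue T x y) (hT : IsC0Semigroup T)
    {t : ℝ} (ht : 0 ≤ t) :
    Tendsto (fun k : ℕ => (k : ℝ) • (T (t / k) x - x)) atTop (𝓝 (t • y)) := by
  have hscale : Tendsto (fun k : ℕ => (k : ℝ) • (t / k)) atTop (𝓝 t) :=
    tendsto_const_nhds.congr' <| (eventually_ne_atTop 0).mono fun k hk =>
      (mul_div_cancel₀ t (Nat.cast_ne_zero.2 hk)).symm
  have := hx.hasFDerivWithinAt.lim (tendsto_const_div_atTop_nhds_zero_nat t)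
    (Eventually.of_forall fun k => by rw [zero_add]; exact div_nonneg ht k.cast_nonneg) hscale
  simpa only [zero_add, hT.1, ContinuousLinearMap.toSpanSingleton_apply,
    one_apply_eq_self] using this

theorem HasGeneratorValue.const_smul (hx : HasGeneratorValue T x y) (c : ℝ) :
    HasGeneratorValue T (c • x) (c • y) :=
  (HasDerivWithinAt.const_smul c hx).congr (fun t _ => (T t).map_smul_of_tower c x)
    ((T 0).map_smul_of_tower c x)

theorem norm_pow_apply_sub_pow_apply_le {P Q : X →L[ℂ] X} (hPQ : Commute P Q)
    (hP : ∀ n : ℕ, ‖P ^ n‖ ≤ M) (hQ : ∀ n : ℕ, ‖Q ^ n‖ ≤ N) (k : ℕ) (x : X) :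
    ‖(P ^ k) x - (Q ^ k) x‖ ≤ M * N * ‖(k : ℝ) • (P x - Q x)‖ := by
  have hM : 0 ≤ M := (norm_nonneg _).trans (hP 0)
  have htelescope : (P ^ k) x - (Q ^ k) x =
      (∑ i ∈ Finset.range k, P ^ i * Q ^ (k - 1 - i)) (P x - Q x) :=
    (congrArg (fun S : X →L[ℂ] X => S x) (hPQ.geom_sum₂_mul k)).symm
  have hsum : ‖∑ i ∈ Finset.range k, P ^ i * Q ^ (k - 1 - i)‖ ≤ k * (M * N) := by
    rw [← nsmul_eq_mul, ← Finset.card_range k, ← Finset.sum_const, Finset.card_range]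
    exact norm_sum_le_of_le _ fun i _ =>
      (norm_mul_le _ _).trans (mul_le_mul (hP _) (hQ _) (norm_nonneg _) hM)
  calc ‖(P ^ k) x - (Q ^ k) x‖ ≤ k * (M * N) * ‖P x - Q x‖ :=
        htelescope ▸ ContinuousLinearMap.le_of_opNorm_le _ hsum _
    _ = M * N * ‖(k : ℝ) • (P x - Q x)‖ := by
        rw [norm_smul, Real.norm_natCast]
        ring

theorem IsC0Semigroup.norm_apply_sub_apply_le (hT : IsC0Semigroup T) (hU : IsC0Semigroup U)
    (hTU : ∀ s, 0 ≤ s → Commute (T s) (U s)) (hM : ∀ s, 0 ≤ s → ‖T s‖ ≤ M)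
    (hN : ∀ s, 0 ≤ s → ‖U s‖ ≤ N) (hy : HasGeneratorValue T x y) (hz : HasGeneratorValue U x z)
    {t : ℝ} (ht : 0 ≤ t) : ‖T t x - U t x‖ ≤ M * N * ‖t • y - t • z‖ := by
  have hlim := ((hy.tendsto_natCast_smul hT ht).sub (hz.tendsto_natCast_smul hU ht)).norm.const_mul
    (M * N)
  refine ge_of_tendsto hlim ?_
  filter_upwards [eventually_ne_atTop 0] with k hk
  have hs : 0 ≤ t / k := by positivity
  have hle := norm_pow_apply_sub_pow_apply_le (hTU (t / k) hs)
    (fun n => hT.pow_eq hs n ▸ hM _ (by positivity))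
    (fun n => hU.pow_eq hs n ▸ hN _ (by positivity)) k x
  rw [hT.apply_div_pow ht hk, hU.apply_div_pow ht hk] at hle
  rwa [← smul_sub, sub_sub_sub_cancel_right]

theorem IsC0Semigroup.tendsto_nhdsGE_zero (hT : IsC0Semigroup T) (x : X) :
    Tendsto (fun t => T t x) (𝓝[≥] 0) (𝓝 x) := by
  rw [← Set.Ioi_insert, nhdsWithin_insert]
  refine Tendsto.sup (tendsto_pure_left.2 fun s hs => ?_) (hT.2.2 x)
  rw [hT.1]
  exact mem_of_mem_nhds hs

theorem IsC0Semigroup.norm_apply_sub_apply_le_abs_sub (hT : IsC0Semigroup T)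
    (hM : ∀ t, 0 ≤ t → ‖T t‖ ≤ M) (x : X) {s t : ℝ} (hs : 0 ≤ s) (ht : 0 ≤ t) :
    ‖T s x - T t x‖ ≤ M * ‖T |s - t| x - x‖ := by
  wlog hst : t ≤ s generalizing s t
  · rw [norm_sub_rev, abs_sub_comm]
    exact this ht hs (le_of_not_ge hst)
  have hfactor : T s x = T t (T (s - t) x) := by
    rw [← ContinuousLinearMap.comp_apply, ← hT.2.1 t (s - t) ht (sub_nonneg.2 hst), add_sub_cancel]
  rw [hfactor, abs_of_nonneg (sub_nonneg.2 hst), ← map_sub]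
  exact (T t).le_of_opNorm_le (hM t ht) _

theorem IsC0Semigroup.continuousOn_apply (hT : IsC0Semigroup T) (hM : ∀ t, 0 ≤ t → ‖T t‖ ≤ M)
    (x : X) : ContinuousOn (fun t => T t x) (Set.Ici 0) := by
  intro t ht
  rw [ContinuousWithinAt, tendsto_iff_norm_sub_tendsto_zero]
  have hdist : Tendsto (fun s => |s - t|) (𝓝[Set.Ici 0] t) (𝓝[≥] 0) := by
    refine tendsto_nhdsWithin_iff.2 ⟨?_, Eventually.of_forall fun s => abs_nonneg (s - t)⟩
    have hcont : Continuous fun s : ℝ => |s - t| := by fun_prop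
    simpa only [sub_self, abs_zero] using hcont.continuousWithinAt.tendsto (x := t)
  have hlim := (tendsto_iff_norm_sub_tendsto_zero.1 (hT.tendsto_nhdsGE_zero x)).comp hdist
    |>.const_mul M
  rw [mul_zero] at hlim
  exact squeeze_zero' (Eventually.of_forall fun s => norm_nonneg _)
    (eventually_mem_nhdsWithin.mono fun s hs => hT.norm_apply_sub_apply_le_abs_sub hM x hs ht) hlim

theorem IsC0Semigroup.continuous_apply_max (hT : IsC0Semigroup T) (hM : ∀ t, 0 ≤ t → ‖T t‖ ≤ M)
    (x : X) : Continuous fun t => T (max t 0) x :=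
  (hT.continuousOn_apply hM x).comp_continuous (continuous_id.max continuous_const) fun t =>
    le_max_right t 0

variable [CompleteSpace X]

theorem IsC0Semigroup.apply_integral (hT : IsC0Semigroup T) (hM : ∀ t, 0 ≤ t → ‖T t‖ ≤ M) (x : X)
    {a h : ℝ} (ha : 0 ≤ a) (hh : 0 ≤ h) :
    T h (∫ r in (0 : ℝ)..a, T (max r 0) x) =
      (∫ r in (0 : ℝ)..a + h, T (max r 0) x) - ∫ r in (0 : ℝ)..h, T (max r 0) x := by
  have hint (b c : ℝ) := (hT.continuous_apply_max hM x).intervalIntegrable (μ := volume) b c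
  calc T h (∫ r in (0 : ℝ)..a, T (max r 0) x)
      = ∫ r in (0 : ℝ)..a, T h (T (max r 0) x) :=
        ((T h).intervalIntegral_comp_comm (hint 0 a)).symm
    _ = ∫ r in (0 : ℝ)..a, T (max (r + h) 0) x := by
        refine intervalIntegral.integral_congr fun r hr => ?_
        rw [Set.uIcc_of_le ha] at hr
        rw [max_eq_left hr.1, max_eq_left (add_nonneg hr.1 hh), add_comm r h, hT.2.1 h r hh hr.1]
        rfl
    _ = ∫ r in h..a + h, T (max r 0) x := by
        rw [intervalIntegral.integral_comp_add_right (fun r => T (max r 0) x), zero_add]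
    _ = _ := (intervalIntegral.integral_interval_sub_left (hint 0 (a + h)) (hint 0 h)).symm

theorem IsC0Semigroup.hasGeneratorValue_integral (hT : IsC0Semigroup T)
    (hM : ∀ t, 0 ≤ t → ‖T t‖ ≤ M) (x : X) {a : ℝ} (ha : 0 ≤ a) :
    HasGeneratorValue T (∫ r in (0 : ℝ)..a, T (max r 0) x) (T a x - x) := by
  have hderiv (b : ℝ) := (hT.continuous_apply_max hM x).integral_hasStrictDerivAt 0 b
  have hsub := ((hderiv (a + 0)).hasDerivAt.comp_const_add a 0).sub (hderiv 0).hasDerivAt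
  rw [add_zero, max_eq_left ha, max_self, hT.1] at hsub
  exact hsub.hasDerivWithinAt.congr (fun h hh => hT.apply_integral hM x ha hh)
    (hT.apply_integral hM x ha le_rfl)

theorem IsC0Semigroup.dense_setOf_hasGeneratorValue (hT : IsC0Semigroup T)
    (hM : ∀ t, 0 ≤ t → ‖T t‖ ≤ M) : Dense {x | ∃ y, HasGeneratorValue T x y} := by
  intro x
  have hderiv := ((hT.continuous_apply_max hM x).integral_hasStrictDerivAt 0 0).hasDerivAt
  rw [max_self, hT.1, one_apply_eq_self, hasDerivAt_iff_tendsto_slope_zero]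
    at hderiv
  refine mem_closure_of_tendsto (hderiv.mono_left (nhdsGT_le_nhdsNE 0)) ?_
  filter_upwards [self_mem_nhdsWithin] with h hh
  rw [intervalIntegral.integral_same, sub_zero, zero_add]
  exact ⟨_, (hT.hasGeneratorValue_integral hM x (le_of_lt hh)).const_smul h⁻¹⟩

theorem hasGeneratorValue_exp_smul (b : X →L[ℂ] X) (x : X) :
    HasGeneratorValue (fun t : ℝ => NormedSpace.exp (t • b)) x (b x) := by
  have h := hasDerivAt_exp_smul_const (𝕂 := ℝ) b (0 : ℝ)
  rw [zero_smul, NormedSpace.exp_zero, one_mul] at h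
  exact ((ContinuousLinearMap.apply ℂ X x).restrictScalars ℝ).hasFDerivAt.comp_hasDerivAt 0 h
    |>.hasDerivWithinAt

theorem isC0Semigroup_exp_smul (b : X →L[ℂ] X) :
    IsC0Semigroup fun t : ℝ => NormedSpace.exp (t • b) := by
  let +nondep : NormedAlgebra ℚ (X →L[ℂ] X) := .restrictScalars ℚ ℂ _
  have hzero : NormedSpace.exp ((0 : ℝ) • b) = 1 := by rw [zero_smul, NormedSpace.exp_zero]
  refine ⟨hzero, fun s t _ _ => ?_, fun x => ?_⟩
  · change NormedSpace.exp ((s + t) • b) = NormedSpace.exp (s • b) * NormedSpace.exp (t • b)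
    rw [add_smul, NormedSpace.exp_add_of_commute (((Commute.refl b).smul_left s).smul_right t)]
  · have hcont := (hasGeneratorValue_exp_smul b x).continuousWithinAt
    simp only [ContinuousWithinAt, hzero, one_apply_eq_self] at hcont
    exact hcont.mono_left (nhdsWithin_mono 0 Set.Ioi_subset_Ici_self)

theorem norm_exp_apply_sub_exp_apply_le {a b : X →L[ℂ] X} (hab : Commute a b)
    (hM : ∀ t : ℝ, 0 ≤ t → ‖NormedSpace.exp (t • a)‖ ≤ M)
    (hN : ∀ t : ℝ, 0 ≤ t → ‖NormedSpace.exp (t • b)‖ ≤ N) (x : X) :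
    ‖NormedSpace.exp a x - NormedSpace.exp b x‖ ≤ M * N * ‖a x - b x‖ := by
  let +nondep : NormedAlgebra ℚ (X →L[ℂ] X) := .restrictScalars ℚ ℂ _
  have := (isC0Semigroup_exp_smul a).norm_apply_sub_apply_le (isC0Semigroup_exp_smul b)
    (fun s _ => ((hab.smul_left s).smul_right s).exp) hM hN (hasGeneratorValue_exp_smul a x)
    (hasGeneratorValue_exp_smul b x) zero_le_one
  simpa only [one_smul] using this

end C0Semigroup

section StrongLimits

variable {ι X Y Z : Type*} [NormedAddCommGroup X] [NormedSpace ℂ X] [NormedAddCommGroup Y]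
  [NormedSpace ℂ Y] [NormedAddCommGroup Z] [NormedSpace ℂ Z] {l : Filter ι} {B R : ℝ} {D : Set X}

/-- Convergence of the operators `F i` to `S` along `l` in the strong operator topology. -/
def StrongTendsto (F : ι → X →L[ℂ] Y) (l : Filter ι) (S : X →L[ℂ] Y) : Prop :=
  ∀ x, Tendsto (fun i => F i x) l (𝓝 (S x))

theorem StrongTendsto.unique [NeBot l] {F : ι → X →L[ℂ] Y} {S S' : X →L[ℂ] Y}
    (hS : StrongTendsto F l S) (hS' : StrongTendsto F l S') : S = S' :=
  ContinuousLinearMap.ext fun x => tendsto_nhds_unique (hS x) (hS' x)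

theorem StrongTendsto.norm_le [NeBot l] {F : ι → X →L[ℂ] Y} {S : X →L[ℂ] Y}
    (hS : StrongTendsto F l S) (hF : ∀ i, ‖F i‖ ≤ B) : ‖S‖ ≤ B := by
  obtain ⟨i⟩ := l.nonempty_of_neBot
  exact S.opNorm_le_bound ((norm_nonneg _).trans (hF i)) fun x =>
    le_of_tendsto' (hS x).norm fun i => (F i).le_of_opNorm_le (hF i) x

theorem StrongTendsto.comp {F : ι → Y →L[ℂ] Z} {G : ι → X →L[ℂ] Y} {S : Y →L[ℂ] Z}
    {U : X →L[ℂ] Y} (hS : StrongTendsto F l S) (hF : ∀ i, ‖F i‖ ≤ B) (hU : StrongTendsto G l U) :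
    StrongTendsto (fun i => (F i).comp (G i)) l (S.comp U) := by
  intro x
  have hdiff : Tendsto (fun i => F i (G i x - U x)) l (𝓝 0) := by
    have hG := (tendsto_iff_norm_sub_tendsto_zero.1 (hU x)).const_mul B
    rw [mul_zero] at hG
    exact squeeze_zero_norm (fun i => (F i).le_of_opNorm_le (hF i) _) hG
  simpa only [map_sub, sub_add_cancel, zero_add, ContinuousLinearMap.comp_apply] using
    hdiff.add (hS (U x))

theorem strongTendsto_zero_of_dense {F : ι → X →L[ℂ] Y} (hF : ∀ᶠ i in l, ‖F i‖ ≤ B)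
    (hD : Dense D) (h : ∀ y ∈ D, Tendsto (fun i => F i y) l (𝓝 0)) : StrongTendsto F l 0 := by
  intro x
  refine NormedAddGroup.tendsto_nhds_zero.2 fun ε hε => ?_
  obtain ⟨y, hyD, hxy⟩ := hD.exists_dist_lt x (show 0 < ε / (2 * (|B| + 1)) by positivity)
  rw [dist_eq_norm, lt_div_iff₀ (by positivity)] at hxy
  filter_upwards [hF, NormedAddGroup.tendsto_nhds_zero.1 (h y hyD) (ε / 2) (by positivity)]
    with i hi hiy
  calc ‖F i x‖ = ‖F i (x - y) + F i y‖ := by rw [map_sub, sub_add_cancel]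
    _ ≤ |B| * ‖x - y‖ + ‖F i y‖ := norm_add_le_of_le
        ((F i).le_of_opNorm_le (hi.trans (le_abs_self B)) _) le_rfl
    _ < ε := by linarith [norm_nonneg (x - y)]

theorem exists_strongTendsto_of_dense [CompleteSpace X] [CompleteSpace Y] {F : ℕ → X →L[ℂ] Y}
    (hF : ∀ n, ‖F n‖ ≤ B) (hD : Dense D) (h : ∀ y ∈ D, CauchySeq fun n => F n y) :
    ∃ S, StrongTendsto F atTop S := by
  have hdiff : StrongTendsto (fun p : ℕ × ℕ => F p.1 - F p.2) atTop 0 :=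
    strongTendsto_zero_of_dense (B := B + B)
      (Eventually.of_forall fun p => norm_sub_le_of_le (hF p.1) (hF p.2)) hD fun y hy =>
        tendsto_zero_iff_norm_tendsto_zero.2 <| by
          simpa only [dist_eq_norm, sub_apply] using cauchySeq_iff_tendsto_dist_atTop_0.1 (h y hy)
  have hlim (x : X) : ∃ y, Tendsto (fun n => F n x) atTop (𝓝 y) := by
    refine cauchySeq_tendsto_of_complete (cauchySeq_iff_tendsto_dist_atTop_0.2 ?_)
    simpa only [dist_eq_norm, sub_apply] using tendsto_zero_iff_norm_tendsto_zero.1 (hdiff x)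
  choose S hS using hlim
  exact ⟨continuousLinearMapOfTendsto F (tendsto_pi_nhds.2 hS), hS⟩

theorem dist_dslope_deriv_le [CompleteSpace Y] {f : ℂ → Y} {c w : ℂ}
    (hf : DifferentiableOn ℂ f (Metric.ball c R)) (hB : ∀ z ∈ Metric.ball c R, ‖f z‖ ≤ B)
    (hw : w ∈ Metric.ball c R) :
    dist (dslope f c w) (deriv f c) ≤ 4 * B / R ^ 2 * dist w c := by
  have hR : 0 < R := Metric.nonempty_ball.1 ⟨w, hw⟩
  have hc : c ∈ Metric.ball c R := Metric.mem_ball_self hR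
  have hmaps : Set.MapsTo f (Metric.ball c R) (Metric.closedBall (f c) (B + B)) := fun z hz =>
    mem_closedBall_iff_norm.2 (norm_sub_le_of_le (hB z hz) (hB c hc))
  have hslope (z : ℂ) (hz : z ∈ Metric.ball c R) : ‖dslope f c z‖ ≤ (B + B) / R :=
    Complex.norm_dslope_le_div_of_mapsTo_ball hf hmaps hz
  have hslope_maps : Set.MapsTo (dslope f c) (Metric.ball c R)
      (Metric.closedBall (dslope f c c) ((B + B) / R + (B + B) / R)) := fun z hz =>
    mem_closedBall_iff_norm.2 (norm_sub_le_of_le (hslope z hz) (hslope c hc))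
  have hdslope := (Complex.differentiableOn_dslope (Metric.ball_mem_nhds c hR)).2 hf
  calc dist (dslope f c w) (deriv f c) = dist (dslope f c w) (dslope f c c) := by rw [dslope_same]
    _ ≤ ((B + B) / R + (B + B) / R) / R * dist w c :=
        Complex.dist_le_div_mul_dist_of_mapsTo_ball hdslope hslope_maps hw
    _ = 4 * B / R ^ 2 * dist w c := by
        field_simp
        ring

theorem norm_slope_sub_slope_le [CompleteSpace Y] {f : ℂ → Y} {c w₁ w₂ : ℂ}
    (hf : DifferentiableOn ℂ f (Metric.ball c R)) (hB : ∀ z ∈ Metric.ball c R, ‖f z‖ ≤ B)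
    (hw₁ : w₁ ∈ Metric.ball c R) (hw₂ : w₂ ∈ Metric.ball c R) (h₁ : w₁ ≠ c) (h₂ : w₂ ≠ c) :
    ‖slope f c w₁ - slope f c w₂‖ ≤ 4 * B / R ^ 2 * (dist w₁ c + dist w₂ c) := by
  rw [← dslope_of_ne f h₁, ← dslope_of_ne f h₂, ← dist_eq_norm, mul_add]
  exact (dist_triangle_right _ _ (deriv f c)).trans
    (add_le_add (dist_dslope_deriv_le hf hB hw₁) (dist_dslope_deriv_le hf hB hw₂))

theorem differentiableAt_of_norm_slope_sub_slope_le [CompleteSpace Y] {f : ℂ → Y} {c : ℂ}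
    (hR : 0 < R) (hf : ∀ w₁ ∈ Metric.ball c R, ∀ w₂ ∈ Metric.ball c R, w₁ ≠ c → w₂ ≠ c →
      ‖slope f c w₁ - slope f c w₂‖ ≤ B * (dist w₁ c + dist w₂ c)) :
    DifferentiableAt ℂ f c := by
  have hcauchy : Cauchy (map (slope f c) (𝓝[≠] c)) := by
    rw [cauchy_map_iff', tendsto_uniformity_iff_dist_tendsto_zero]
    have hdist : Tendsto (fun w => dist w c) (𝓝[≠] c) (𝓝 0) :=
      (tendsto_iff_dist_tendsto_zero.1 tendsto_id).mono_left nhdsWithin_le_nhds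
    have hsum : Tendsto (fun p : ℂ × ℂ => B * (dist p.1 c + dist p.2 c)) (𝓝[≠] c ×ˢ 𝓝[≠] c)
        (𝓝 0) := by
      simpa only [add_zero, mul_zero, Function.comp_def] using
        ((hdist.comp tendsto_fst).add (hdist.comp tendsto_snd)).const_mul B
    have hmem : ∀ᶠ w in 𝓝[≠] c, w ∈ Metric.ball c R ∧ w ≠ c :=
      (eventually_nhdsWithin_of_eventually_nhds (Metric.ball_mem_nhds c hR)).and
        eventually_mem_nhdsWithin
    refine squeeze_zero' (Eventually.of_forall fun p => dist_nonneg) ?_ hsum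
    filter_upwards [hmem.prod_mk hmem] with p hp
    rw [dist_eq_norm]
    exact hf p.1 hp.1.1 p.2 hp.2.1 hp.1.2 hp.2.2
  obtain ⟨f', hf'⟩ := CompleteSpace.complete hcauchy
  exact (hasDerivAt_iff_tendsto_slope.2 hf').differentiableAt

theorem differentiableAt_of_strongTendsto [NeBot l] [CompleteSpace Y] {F : ι → ℂ → X →L[ℂ] Y}
    {S : ℂ → X →L[ℂ] Y} {c : ℂ} (hR : 0 < R)
    (hF : ∀ i, DifferentiableOn ℂ (F i) (Metric.ball c R))
    (hB : ∀ i, ∀ z ∈ Metric.ball c R, ‖F i z‖ ≤ B)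
    (hS : ∀ z ∈ Metric.ball c R, StrongTendsto (fun i => F i z) l (S z)) :
    DifferentiableAt ℂ S c := by
  have hslope (z : ℂ) (hz : z ∈ Metric.ball c R) :
      StrongTendsto (fun i => slope (F i) c z) l (slope S c z) := fun x => by
    simpa only [slope_def_module, smul_apply, sub_apply] using
      (((hS z hz x).sub (hS c (Metric.mem_ball_self hR) x)).const_smul (z - c)⁻¹)
  refine differentiableAt_of_norm_slope_sub_slope_le (B := 4 * B / R ^ 2) hR
    fun w₁ hw₁ w₂ hw₂ h₁ h₂ => ?_
  exact StrongTendsto.norm_le (fun x => (hslope w₁ hw₁ x).sub (hslope w₂ hw₂ x)) fun i =>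
    norm_slope_sub_slope_le (hF i) (hB i) hw₁ hw₂ h₁ h₂

end StrongLimits

section HolomorphicSemigroup

variable {X : Type*} [NormedAddCommGroup X] [NormedSpace ℂ X] {S : ℂ → X →L[ℂ] X}
  {δ δ' B B' : ℝ}

/-- `S` is a holomorphic semigroup of angle `δ` which is bounded by `B` on the whole closed sector
`|arg z| ≤ δ`. Since `Complex.arg 0 = 0`, the semigroup law and the bound include the vertex. -/
structure IsBoundedHolomorphicSemigroup (S : ℂ → X →L[ℂ] X) (δ B : ℝ) : Prop where
  map_add : ∀ z₁ z₂ : ℂ, |z₁.arg| ≤ δ → |z₂.arg| ≤ δ → S (z₁ + z₂) = (S z₁).comp (S z₂)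
  differentiableOn : DifferentiableOn ℂ S {z | z ≠ 0 ∧ |z.arg| < δ}
  strongTendsto_one : StrongTendsto S (𝓝[{z | z ≠ 0 ∧ |z.arg| ≤ δ}] 0) 1
  norm_le : ∀ z : ℂ, |z.arg| ≤ δ → ‖S z‖ ≤ B

theorem IsBoundedHolomorphicSemigroup.mono (hS : IsBoundedHolomorphicSemigroup S δ B)
    (hδ : δ' ≤ δ) (hB : B ≤ B') : IsBoundedHolomorphicSemigroup S δ' B' where
  map_add z₁ z₂ h₁ h₂ := hS.map_add z₁ z₂ (h₁.trans hδ) (h₂.trans hδ)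
  differentiableOn := hS.differentiableOn.mono fun _ hz => ⟨hz.1, hz.2.trans_le hδ⟩
  strongTendsto_one x := (hS.strongTendsto_one x).mono_left <|
    nhdsWithin_mono 0 fun _ hz => ⟨hz.1, hz.2.trans hδ⟩
  norm_le z hz := (hS.norm_le z (hz.trans hδ)).trans hB

theorem eventually_abs_arg_lt (hδ : δ ≤ Real.pi) {z : ℂ} (hz : z ≠ 0) (harg : |z.arg| < δ) :
    ∀ᶠ w in 𝓝 z, |w.arg| < δ := by
  have hslit : z ∈ Complex.slitPlane := Complex.mem_slitPlane_iff_arg.2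
    ⟨fun h => (harg.trans_le hδ).ne (by rw [h, abs_of_pos Real.pi_pos]), hz⟩
  exact (Complex.continuousAt_arg hslit).abs.eventually (eventually_lt_nhds harg)

theorem HasExpBoundOnSector.smul {a : X →L[ℂ] X} (ha : HasExpBoundOnSector a δ B) {r : ℝ}
    (hr : 0 ≤ r) : HasExpBoundOnSector (r • a) δ B := by
  intro z hz
  have harg : |((r : ℂ) * z).arg| ≤ δ := by
    rcases hr.eq_or_lt with rfl | hr
    · rw [Complex.ofReal_zero, zero_mul, Complex.arg_zero, abs_zero]
      exact (abs_nonneg _).trans hz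
    · rwa [Complex.arg_real_mul z hr]
  have hsmul : z • r • a = ((r : ℂ) * z) • a := by rw [mul_smul, Complex.coe_smul, smul_comm]
  exact hsmul ▸ ha _ harg

theorem hasExpBoundOnSector_zero : HasExpBoundOnSector (0 : X →L[ℂ] X) δ 1 := fun z _ => by
  rw [smul_zero, NormedSpace.exp_zero]
  exact ContinuousLinearMap.norm_id_le

variable [CompleteSpace X] {a b : X →L[ℂ] X} {A : ℕ → X →L[ℂ] X} {D : Set X}

theorem HasExpBoundOnSector.norm_exp_smul_apply_sub_le (ha : HasExpBoundOnSector a δ B)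
    (hb : HasExpBoundOnSector b δ B') (hab : Commute a b) {z : ℂ} (hz : |z.arg| ≤ δ) (x : X) :
    ‖NormedSpace.exp (z • a) x - NormedSpace.exp (z • b) x‖ ≤ B * B' * (‖z‖ * ‖a x - b x‖) := by
  rw [← norm_smul, smul_sub]
  exact norm_exp_apply_sub_exp_apply_le ((hab.smul_left z).smul_right z)
    (fun t ht => smul_comm z t a ▸ ha.smul ht z hz) (fun t ht => smul_comm z t b ▸ hb.smul ht z hz)
    x

theorem exists_strongTendsto_exp_smul (hA : ∀ m n, Commute (A m) (A n))
    (hE : ∀ n, HasExpBoundOnSector (A n) δ B) (hD : Dense D)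
    (hAD : ∀ x ∈ D, CauchySeq fun n => A n x) {z : ℂ} (hz : |z.arg| ≤ δ) :
    ∃ S, StrongTendsto (fun n => NormedSpace.exp (z • A n)) atTop S := by
  refine exists_strongTendsto_of_dense (fun n => hE n z hz) hD fun x hx => ?_
  have hlim := ((cauchySeq_iff_tendsto_dist_atTop_0.1 (hAD x hx)).const_mul ‖z‖).const_mul (B * B)
  simp only [mul_zero, dist_eq_norm] at hlim
  refine cauchySeq_iff_tendsto_dist_atTop_0.2
    (squeeze_zero (fun p => dist_nonneg) (fun p => ?_) hlim)
  rw [dist_eq_norm]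
  exact (hE p.1).norm_exp_smul_apply_sub_le (hE p.2) (hA p.1 p.2) hz x

theorem strongTendsto_one_of_strongTendsto_exp_smul
    (hE : ∀ n, HasExpBoundOnSector (A n) δ B) (hD : Dense D)
    (hAD : ∀ x ∈ D, CauchySeq fun n => A n x)
    (hS : ∀ z, |z.arg| ≤ δ → StrongTendsto (fun n => NormedSpace.exp (z • A n)) atTop (S z)) :
    StrongTendsto S (𝓝[{z | z ≠ 0 ∧ |z.arg| ≤ δ}] 0) 1 := by
  have hle {z : ℂ} (hz : |z.arg| ≤ δ) {x y : X} (hy : Tendsto (fun n => A n x) atTop (𝓝 y)) :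
      ‖S z x - x‖ ≤ B * 1 * (‖z‖ * ‖y‖) := by
    refine le_of_tendsto_of_tendsto' ((hS z hz x).sub_const x).norm
      ((hy.norm.const_mul ‖z‖).const_mul (B * 1)) fun n => ?_
    simpa only [smul_zero, NormedSpace.exp_zero, one_apply_eq_self, zero_apply, sub_zero] using
      (hE n).norm_exp_smul_apply_sub_le hasExpBoundOnSector_zero (Commute.zero_right _) hz x
  have hsub : StrongTendsto (fun z => S z - 1) (𝓝[{z | z ≠ 0 ∧ |z.arg| ≤ δ}] 0) 0 := by
    refine strongTendsto_zero_of_dense (B := B + 1) ?_ hD fun x hx => ?_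
    · filter_upwards [self_mem_nhdsWithin] with z hz
      exact norm_sub_le_of_le ((hS z hz.2).norm_le fun n => hE n z hz.2)
        ContinuousLinearMap.norm_id_le
    · obtain ⟨y, hy⟩ := cauchySeq_tendsto_of_complete (hAD x hx)
      have hcont : Continuous fun z : ℂ => B * 1 * (‖z‖ * ‖y‖) := by fun_prop
      have hlim := (hcont.tendsto 0).mono_left (nhdsWithin_le_nhds (s := {z | z ≠ 0 ∧ |z.arg| ≤ δ}))
      rw [norm_zero, zero_mul, mul_zero] at hlim
      refine squeeze_zero_norm' ?_ hlim
      filter_upwards [self_mem_nhdsWithin] with z hz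
      exact hle hz.2 hy
  intro x
  simpa only [sub_apply, sub_add_cancel, zero_apply, zero_add, one_apply_eq_self] using
    (hsub x).add_const x

theorem exists_isBoundedHolomorphicSemigroup_of_exp_smul (hδ : δ ≤ Real.pi)
    (hA : ∀ m n, Commute (A m) (A n)) (hE : ∀ n, HasExpBoundOnSector (A n) δ B) (hD : Dense D)
    (hAD : ∀ x ∈ D, CauchySeq fun n => A n x) :
    ∃ S : ℂ → X →L[ℂ] X, IsBoundedHolomorphicSemigroup S δ B ∧
      ∀ z, |z.arg| ≤ δ → StrongTendsto (fun n => NormedSpace.exp (z • A n)) atTop (S z) := by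
  let +nondep : NormedAlgebra ℚ (X →L[ℂ] X) := .restrictScalars ℚ ℂ _
  -- Taking `S z` to be the limit wherever it exists, the semigroup law needs no convexity of the
  -- sector.
  have hchoice (z : ℂ) : (∃ L, StrongTendsto (fun n => NormedSpace.exp (z • A n)) atTop L) →
      ∃ L, StrongTendsto (fun n => NormedSpace.exp (z • A n)) atTop L := id
  choose! S hS' using hchoice
  have hS (z : ℂ) (hz : |z.arg| ≤ δ) :
      StrongTendsto (fun n => NormedSpace.exp (z • A n)) atTop (S z) :=
    hS' z (exists_strongTendsto_exp_smul hA hE hD hAD hz)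
  refine ⟨S, ⟨fun z₁ z₂ h₁ h₂ => ?_, fun z hz => ?_,
    strongTendsto_one_of_strongTendsto_exp_smul hE hD hAD hS,
    fun z hz => (hS z hz).norm_le fun n => hE n z hz⟩, hS⟩
  · have hexp (n : ℕ) : NormedSpace.exp ((z₁ + z₂) • A n) =
        (NormedSpace.exp (z₁ • A n)).comp (NormedSpace.exp (z₂ • A n)) := by
      rw [add_smul, NormedSpace.exp_add_of_commute
        (((Commute.refl (A n)).smul_left z₁).smul_right z₂)]
      rfl
    have hcomp := (hS z₁ h₁).comp (fun n => hE n z₁ h₁) (hS z₂ h₂)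
    simp only [← hexp] at hcomp
    exact (hS' _ ⟨_, hcomp⟩).unique hcomp
  · obtain ⟨R, hR, hball⟩ := Metric.eventually_nhds_iff_ball.1 (eventually_abs_arg_lt hδ hz.1 hz.2)
    exact (differentiableAt_of_strongTendsto hR
      (fun n w _ =>
        (hasDerivAt_exp_smul_const (𝕂 := ℂ) (A n) w).differentiableAt.differentiableWithinAt)
      (fun n w hw => hE n w (hball w hw).le)
      (fun w hw => hS w (hball w hw).le)).differentiableWithinAt

end HolomorphicSemigroup

section Extension

variable {X : Type*} [NormedAddCommGroup X] [NormedSpace ℂ X] {T : ℝ → X →L[ℂ] X}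
  {M K B δ : ℝ} {ζ : ℂ}

/-- The bounded operator `(T h - 1) / h`, which approximates the generator of `T` as `h ↓ 0`. -/
noncomputable def differenceQuotient (T : ℝ → X →L[ℂ] X) (h : ℝ) : X →L[ℂ] X :=
  h⁻¹ • (T h - 1)

theorem IsC0Semigroup.commute_differenceQuotient_left (hT : IsC0Semigroup T) {s t : ℝ}
    (hs : 0 ≤ s) (ht : 0 ≤ t) : Commute (differenceQuotient T s) (T t) :=
  ((hT.commute hs ht).sub_left (Commute.one_left _)).smul_left _

theorem IsC0Semigroup.commute_differenceQuotient (hT : IsC0Semigroup T) {s t : ℝ}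
    (hs : 0 ≤ s) (ht : 0 ≤ t) : Commute (differenceQuotient T s) (differenceQuotient T t) :=
  ((hT.commute_differenceQuotient_left hs ht).sub_right (Commute.one_right _)).smul_right _

theorem HasGeneratorValue.tendsto_differenceQuotient {x y : X} (hx : HasGeneratorValue T x y)
    (hT : IsC0Semigroup T) : Tendsto (fun h => differenceQuotient T h x) (𝓝[>] 0) (𝓝 y) := by
  have hslope := (hasDerivWithinAt_iff_tendsto_slope' Set.self_notMem_Ioi).1
    (hasDerivWithinAt_Ioi_iff_Ici.2 hx)
  refine hslope.congr fun h => ?_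
  rw [slope_def_module, sub_zero, hT.1]
  rfl

theorem IsC0Semigroup.hasExpBoundOnSector_differenceQuotient [CompleteSpace X]
    (hT : IsC0Semigroup T) (hM1 : 1 ≤ M) (hM : ∀ t, 0 ≤ t → ‖T t‖ ≤ M) (hζ : ‖ζ‖ = 1)
    (hK : 1 / 2 ≤ K) (hlow : ∀ t : ℝ, 0 < t → ∀ x : X, ‖x‖ / K ≤ ‖ζ • x - T t x‖) {h : ℝ}
    (hh : 0 < h) :
    HasExpBoundOnSector (differenceQuotient T h) (1 / 512 / (M * K))
      (10240 * (M * K) * (1 + Real.log (M * K))) := by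
  refine (hasExpBoundOnSector_sub_one hM1 (fun n => ?_) hζ hK fun n hn y => ?_).smul (by positivity)
  · exact hT.pow_eq hh.le n ▸ hM _ (by positivity)
  · refine y.opNorm_le_bound (by positivity) fun x => ?_
    have ht : 0 < n * h := mul_pos (Nat.cast_pos.2 hn) hh
    calc ‖y x‖ ≤ K * ‖ζ • y x - T (n * h) (y x)‖ :=
          (div_le_iff₀' (by positivity)).1 (hlow _ ht (y x))
      _ ≤ K * (‖ζ • y - T h ^ n * y‖ * ‖x‖) := by
          rw [hT.pow_eq hh.le]
          gcongr
          exact (ζ • y - T (n * h) * y).le_opNorm x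
      _ = K * ‖ζ • y - T h ^ n * y‖ * ‖x‖ := (mul_assoc _ _ _).symm

variable [CompleteSpace X]

theorem IsC0Semigroup.strongTendsto_exp_smul_differenceQuotient (hT : IsC0Semigroup T)
    (hM : ∀ t, 0 ≤ t → ‖T t‖ ≤ M)
    (hE : ∀ h, 0 < h → ∀ t : ℝ, 0 ≤ t → ‖NormedSpace.exp (t • differenceQuotient T h)‖ ≤ B)
    {t : ℝ} (ht : 0 ≤ t) :
    StrongTendsto (fun h => NormedSpace.exp (t • differenceQuotient T h)) (𝓝[>] 0) (T t) := by
  let +nondep : NormedAlgebra ℚ (X →L[ℂ] X) := .restrictScalars ℚ ℂ _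
  have hsub : StrongTendsto (fun h => NormedSpace.exp (t • differenceQuotient T h) - T t)
      (𝓝[>] 0) 0 := by
    refine strongTendsto_zero_of_dense (B := B + M) ?_ (hT.dense_setOf_hasGeneratorValue hM) ?_
    · filter_upwards [self_mem_nhdsWithin] with h hh
      exact norm_sub_le_of_le (hE h hh t ht) (hM t ht)
    rintro x ⟨y, hy⟩
    have hlim := (((hy.tendsto_differenceQuotient hT).const_smul t).sub_const
      (t • y)).norm.const_mul (B * M)
    rw [sub_self, norm_zero, mul_zero] at hlim
    refine squeeze_zero_norm' ?_ hlim
    filter_upwards [self_mem_nhdsWithin] with h hh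
    exact (isC0Semigroup_exp_smul (differenceQuotient T h)).norm_apply_sub_apply_le hT
      (fun s hs => ((hT.commute_differenceQuotient_left hh.le hs).smul_left s).exp_left) (hE h hh)
      hM (hasGeneratorValue_exp_smul _ x) hy ht
  intro x
  simpa only [sub_apply, sub_add_cancel, zero_apply, zero_add] using (hsub x).add_const (T t x)

theorem IsC0Semigroup.exists_isBoundedHolomorphicSemigroup (hT : IsC0Semigroup T)
    (hM : ∀ t, 0 ≤ t → ‖T t‖ ≤ M) (hδ : 0 ≤ δ) (hδπ : δ ≤ Real.pi)
    (hE : ∀ h, 0 < h → HasExpBoundOnSector (differenceQuotient T h) δ B) :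
    ∃ S : ℂ → X →L[ℂ] X, (∀ t : ℝ, 0 ≤ t → S t = T t) ∧ IsBoundedHolomorphicSemigroup S δ B := by
  set h : ℕ → ℝ := fun n => 1 / ((n : ℝ) + 1)
  have hpos (n : ℕ) : 0 < h n := Nat.one_div_pos_of_nat
  have hlim : Tendsto h atTop (𝓝[>] 0) :=
    tendsto_nhdsWithin_iff.2 ⟨tendsto_one_div_add_atTop_nhds_zero_nat, Eventually.of_forall hpos⟩
  obtain ⟨S, hS, hStrong⟩ := exists_isBoundedHolomorphicSemigroup_of_exp_smul hδπ
    (fun m n => hT.commute_differenceQuotient (hpos m).le (hpos n).le) (fun n => hE _ (hpos n))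
    (hT.dense_setOf_hasGeneratorValue hM)
    (fun x ⟨y, hy⟩ => ((hy.tendsto_differenceQuotient hT).comp hlim).cauchySeq)
  have harg (t : ℝ) (ht : 0 ≤ t) : |(t : ℂ).arg| ≤ δ := by
    rwa [Complex.arg_ofReal_of_nonneg ht, abs_zero]
  refine ⟨S, fun t ht => (hStrong t (harg t ht)).unique fun x => ?_, hS⟩
  exact (hT.strongTendsto_exp_smul_differenceQuotient hM
    (fun h hh s hs => hE h hh s (harg s hs)) ht x).comp hlim

theorem IsC0Semigroup.exists_isBoundedHolomorphicSemigroup_of_norm_div_le (hT : IsC0Semigroup T)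
    (hM1 : 1 ≤ M) (hM : ∀ t, 0 ≤ t → ‖T t‖ ≤ M) (hζ : ‖ζ‖ = 1) (hK : 1 / 2 ≤ K)
    (hlow : ∀ t : ℝ, 0 < t → ∀ x : X, ‖x‖ / K ≤ ‖ζ • x - T t x‖) :
    ∃ S : ℂ → X →L[ℂ] X, (∀ t : ℝ, 0 ≤ t → S t = T t) ∧
      IsBoundedHolomorphicSemigroup S (1 / 512 / (M * K))
        (10240 * (M * K) * (1 + Real.log (M * K))) := by
  have hMK : 1 * (1 / 2) ≤ M * K := by gcongr
  have hangle : 1 / 512 / (M * K) ≤ Real.pi := by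
    rw [div_le_iff₀ (by linarith)]
    nlinarith [Real.pi_gt_three]
  exact hT.exists_isBoundedHolomorphicSemigroup hM (by positivity) hangle fun h hh =>
    hT.hasExpBoundOnSector_differenceQuotient hM1 hM hζ hK hlow hh

end Extension

/-- Quantitative version of Kato's criterion: there are universal constants
`c₁, c₂ > 0` such that any `C₀`-semigroup with `‖T t‖ ≤ M` (`M ≥ 1`) satisfying
`‖(ζ I - T t) x‖ ≥ ‖x‖/K` for some unimodular `ζ` and `K ≥ 1/2` extends to a
bounded holomorphic semigroup `S` on the sector `|arg z| ≤ c₁/C̃`, `C̃ = M² K`,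
with `‖S z‖ ≤ c₂ · C̃ · (1 + log C̃)` there. -/
theorem stmt3 :
    ∃ c₁ c₂ : ℝ, 0 < c₁ ∧ 0 < c₂ ∧
      ∀ (X : Type u) [NormedAddCommGroup X] [NormedSpace ℂ X] [CompleteSpace X]
        (T : ℝ → X →L[ℂ] X), IsC0Semigroup T →
      ∀ M : ℝ, 1 ≤ M → (∀ t : ℝ, 0 ≤ t → ‖T t‖ ≤ M) →
      ∀ (ζ : ℂ), ‖ζ‖ = 1 → ∀ K : ℝ, 1 / 2 ≤ K →
      (∀ t : ℝ, 0 < t → ∀ x : X, ‖x‖ / K ≤ ‖ζ • x - T t x‖) →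
      ∃ S : ℂ → X →L[ℂ] X,
        (∀ t : ℝ, 0 ≤ t → S (t : ℂ) = T t) ∧
        (∀ z₁ z₂ : ℂ, z₁ ≠ 0 → z₂ ≠ 0 →
          |z₁.arg| ≤ c₁ / (M ^ 2 * K) → |z₂.arg| ≤ c₁ / (M ^ 2 * K) →
          S (z₁ + z₂) = (S z₁).comp (S z₂)) ∧
        DifferentiableOn ℂ S {z : ℂ | z ≠ 0 ∧ |z.arg| < c₁ / (M ^ 2 * K)} ∧
        (∀ x : X, Tendsto (fun z => S z x)
          (nhdsWithin 0 {z : ℂ | z ≠ 0 ∧ |z.arg| ≤ c₁ / (M ^ 2 * K)}) (nhds x)) ∧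
        ∀ z : ℂ, z ≠ 0 → |z.arg| ≤ c₁ / (M ^ 2 * K) →
          ‖S z‖ ≤ c₂ * (M ^ 2 * K) * (1 + Real.log (M ^ 2 * K)) := by
  refine ⟨1 / 512, 10240, by norm_num, by norm_num, fun X _ _ _ T hT M hM1 hM ζ hζ K hK hlow => ?_⟩
  obtain ⟨S, hST, hS⟩ :=
    hT.exists_isBoundedHolomorphicSemigroup_of_norm_div_le hM1 hM hζ hK hlow
  have hMK : 1 * (1 / 2) ≤ M * K := by gcongr
  have hle : M * K ≤ M ^ 2 * K := by gcongr; exact le_self_pow₀ hM1 two_ne_zero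
  have hlog := mul_one_add_log_le_mul_one_add_log (by linarith) hle
  have hS' := hS.mono (δ' := 1 / 512 / (M ^ 2 * K))
    (B' := 10240 * (M ^ 2 * K) * (1 + Real.log (M ^ 2 * K))) (by gcongr) (by linarith)
  exact ⟨S, hST, fun z₁ z₂ _ _ => hS'.map_add z₁ z₂, hS'.differentiableOn, hS'.strongTendsto_one,
    fun z _ => hS'.norm_le z⟩
end

section
/- Let (T(t))_{t≥0} be a C₀-semigroup on a complex Banach space X with ‖T(t)‖ ≤ M for all t ≥ 0, where M ≥ 1, and suppose there exists 0 < ε ≤ 2 such that ‖T(t) − I‖ ≤ 2 − ε for all t > 0. Then (T(t)) extends to a bounded holomorphic semigroup on a sector Σ_θ with θ comparable (up to universal constants) to ε/M², and there exist universal constants c₁, c₂ > 0 such that ‖T(z)‖ ≤ c₂ · (M²/ε) · (1 + log(M/ε)) for every z ∈ ℂ∖{0} with |arg z| ≤ c₁ · ε/M². -/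
open Filter Topology

universe u

/-!
Let `A` be the generator. For `Re l > 0` and `Im l ≠ 0` put `h = π / |Im l|`, so that
`e^{-lh} = -q` with `0 < q < 1`. Then `y = (l - A)⁻¹ x` satisfies
`y + q T(h) y = ∫₀ʰ e^{-lt} T(t) x dt`, whose left side has norm at least `(ε/2) ‖y‖` because
`‖T(h) - 1‖ ≤ 2 - ε`. Hence `|Im l| ‖(l - A)⁻¹‖ ≤ K`, where `K = 2πM/ε`.

This decay makes the Fourier inversion `T(1) = (2πi)⁻¹ ∫ e^μ (μ - A)⁻² dμ` over `Re μ = 1`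
absolutely convergent. Since `μ (μ - A)⁻¹ - 1` is bounded by `M + K + 1`, the resolvent
`(μ - zA)⁻¹` is given by a Neumann series in `z - 1` on a disc of radius comparable to `ε/M`,
uniformly in `μ`, and replacing `A` by `zA` in the integral extends `T` holomorphically to that
disc. Rescaling time moves the disc to any `t > 0`, and the identity theorem glues the extensions
and transports the semigroup law. No logarithm is lost because `∫ ‖(μ - A)⁻¹‖² |dμ|` is bounded by
a multiple of `MK`.
-/

open MeasureTheory Set FourierTransform
open Complex (I)
open scoped Real

section Sector

/-- The open sector of slope `ρ` around the positive half-line, i.e. `|arg z| < arctan ρ`. -/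
def slopeSector (ρ : ℝ) : Set ℂ := {z | |z.im| < ρ * z.re}

variable {ρ : ℝ} {z w : ℂ}

theorem isOpen_slopeSector (ρ : ℝ) : IsOpen (slopeSector ρ) :=
  isOpen_lt (by fun_prop) (by fun_prop)

theorem convex_slopeSector (ρ : ℝ) : Convex ℝ (slopeSector ρ) := by
  have h : ConvexOn ℝ univ fun z : ℂ => |z.im| - ρ * z.re :=
    (convexOn_univ_norm.comp_linearMap Complex.imLm).sub
      ((ρ • Complex.reLm).concaveOn convex_univ)
  simpa [slopeSector, sub_neg] using h.convex_lt 0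

theorem add_mem_slopeSector (hz : z ∈ slopeSector ρ) (hw : w ∈ slopeSector ρ) :
    z + w ∈ slopeSector ρ :=
  calc |(z + w).im| ≤ |z.im| + |w.im| := abs_add_le _ _
    _ < ρ * z.re + ρ * w.re := add_lt_add hz hw
    _ = ρ * (z + w).re := by rw [Complex.add_re, mul_add]

theorem re_pos_of_mem_slopeSector (hρ : 0 < ρ) (hz : z ∈ slopeSector ρ) : 0 < z.re :=
  (pos_iff_pos_of_mul_pos ((abs_nonneg _).trans_lt hz)).1 hρ

theorem ofReal_mem_slopeSector (hρ : 0 < ρ) {t : ℝ} (ht : 0 < t) : (t : ℂ) ∈ slopeSector ρ := by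
  simpa [slopeSector] using mul_pos hρ ht

theorem mem_ball_re_of_mem_slopeSector (hz : z ∈ slopeSector ρ) :
    z ∈ Metric.ball (z.re : ℂ) (ρ * z.re) := by
  rw [mem_ball_iff_norm, sub_eq_iff_eq_add'.2 (Complex.re_add_im z).symm]
  simpa [slopeSector] using hz

theorem pos_of_ofReal_mem_ball {r t : ℝ} (hρ1 : ρ ≤ 1) (ht : 0 ≤ t)
    (hr : (r : ℂ) ∈ Metric.ball (t : ℂ) (ρ * t)) : 0 < r := by
  rw [mem_ball_iff_norm', ← Complex.ofReal_sub, Complex.norm_real] at hr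
  linarith [le_abs_self (t - r), mul_le_of_le_one_left ht hρ1, Real.norm_eq_abs (t - r)]

theorem mem_slopeSector_of_abs_arg_le (hρ : 0 < ρ) (hρ1 : ρ ≤ 1) (hz : z ≠ 0)
    (harg : |z.arg| ≤ ρ / 2) : z ∈ slopeSector ρ := by
  have hcos : 1 / 2 < Real.cos z.arg := by
    have hsq : z.arg ^ 2 ≤ (1 / 2) ^ 2 := sq_le_sq' (by linarith [(abs_le.1 harg).1])
      (by linarith [(abs_le.1 harg).2])
    linarith [Real.one_sub_sq_div_two_le_cos (x := z.arg)]
  calc |z.im| = ‖z‖ * |Real.sin z.arg| := by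
        rw [← Complex.norm_mul_sin_arg, abs_mul, abs_norm]
    _ ≤ ‖z‖ * (ρ / 2) := by gcongr; exact Real.abs_sin_le_abs.trans harg
    _ < ‖z‖ * (ρ * Real.cos z.arg) := by
        gcongr
        linarith [mul_lt_mul_of_pos_left hcos hρ]
    _ = ρ * z.re := by rw [← Complex.norm_mul_cos_arg]; ring

end Sector

section HolomorphicFunctions

variable {E : Type*} [NormedAddCommGroup E] [NormedSpace ℂ E]

theorem aestronglyMeasurable_deriv_of_mem_nhds {α : Type*} [MeasurableSpace α] {μ : Measure α}
    {U : Set ℂ} {z₀ : ℂ} (hU : U ∈ 𝓝 z₀) {F : ℂ → α → E}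
    (hmeas : ∀ z ∈ U, AEStronglyMeasurable (F z) μ)
    (hdiff : ∀ a, DifferentiableAt ℂ (F · a) z₀) :
    AEStronglyMeasurable (fun a => deriv (F · a) z₀) μ := by
  classical
  refine aestronglyMeasurable_of_tendsto_ae (𝓝[≠] z₀)
    (f := fun z a => if z ∈ U then slope (F · a) z₀ z else 0) (fun z => ?_)
    (.of_forall fun a => ?_)
  · split_ifs with hz
    · exact ((hmeas z hz).sub (hmeas z₀ (mem_of_mem_nhds hU))).const_smul _
    · exact aestronglyMeasurable_const
  · refine (hasDerivAt_iff_tendsto_slope.1 (hdiff a).hasDerivAt).congr' ?_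
    filter_upwards [nhdsWithin_le_nhds hU] with z hz
    rw [if_pos hz]

theorem differentiableOn_integral_of_dominated {α : Type*} [MeasurableSpace α] {μ : Measure α}
    {U : Set ℂ} (hU : IsOpen U) {F : ℂ → α → E} {bound : α → ℝ}
    (hmeas : ∀ z ∈ U, AEStronglyMeasurable (F z) μ) (hint : Integrable bound μ)
    (hbound : ∀ a, ∀ z ∈ U, ‖F z a‖ ≤ bound a)
    (hdiff : ∀ a, DifferentiableOn ℂ (F · a) U) :
    DifferentiableOn ℂ (fun z => ∫ a, F z a ∂μ) U := by
  intro z₀ hz₀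
  obtain ⟨r, hr, hrU⟩ := Metric.isOpen_iff.1 hU z₀ hz₀
  have hsub : ∀ z ∈ Metric.ball z₀ (r / 2), Metric.closedBall z (r / 3) ⊆ U := fun z hz =>
    (Metric.closedBall_subset_ball' (by rw [Metric.mem_ball] at hz; linarith)).trans hrU
  have hderiv : ∀ a, ∀ z ∈ Metric.ball z₀ (r / 2), HasDerivAt (F · a) (deriv (F · a) z) z :=
    fun a z hz => ((hdiff a).differentiableAt
      (hU.mem_nhds (hsub z hz (Metric.mem_closedBall_self (by positivity))))).hasDerivAt
  have hcauchy : ∀ a, ∀ z ∈ Metric.ball z₀ (r / 2),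
      ‖deriv (F · a) z‖ ≤ bound a / (r / 3) := fun a z hz =>
    Complex.norm_deriv_le_of_forall_mem_sphere_norm_le (by positivity)
      (((hdiff a).mono (hsub z hz)).diffContOnCl_ball subset_rfl)
      fun w hw => hbound a w (hsub z hz (Metric.sphere_subset_closedBall hw))
  have hderiv_meas : AEStronglyMeasurable (fun a => deriv (F · a) z₀) μ :=
    aestronglyMeasurable_deriv_of_mem_nhds (hU.mem_nhds hz₀) hmeas fun a =>
      (hderiv a z₀ (Metric.mem_ball_self (by positivity))).differentiableAt
  exact (hasDerivAt_integral_of_dominated_loc_of_deriv_le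
    (Metric.ball_mem_nhds z₀ (by positivity : 0 < r / 2))
    (by filter_upwards [hU.mem_nhds hz₀] with z hz using hmeas z hz)
    (hint.mono' (hmeas z₀ hz₀) (.of_forall fun a => hbound a z₀ hz₀)) hderiv_meas
    (.of_forall hcauchy) (hint.div_const _)
    (.of_forall hderiv)).2.differentiableAt.differentiableWithinAt

variable [CompleteSpace E]

theorem eqOn_of_eq_ofReal {U : Set ℂ} (hU : IsOpen U) (hUc : IsPreconnected U) {f g : ℂ → E}
    (hf : DifferentiableOn ℂ f U) (hg : DifferentiableOn ℂ g U) {t : ℝ} (ht : (t : ℂ) ∈ U)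
    (heq : ∀ r : ℝ, (r : ℂ) ∈ U → f r = g r) : EqOn f g U := by
  have hofReal : Tendsto ((↑) : ℝ → ℂ) (𝓝[≠] t) (𝓝[≠] (t : ℂ)) :=
    Complex.continuous_ofReal.continuousWithinAt.tendsto_nhdsWithin fun r hr => by simpa using hr
  have hmem : ∀ᶠ r : ℝ in 𝓝[≠] t, (r : ℂ) ∈ U :=
    nhdsWithin_le_nhds (Complex.continuous_ofReal.continuousAt.eventually (hU.mem_nhds ht))
  exact (hf.analyticOnNhd hU).eqOn_of_preconnected_of_frequently_eq (hg.analyticOnNhd hU) hUc ht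
    (hofReal.frequently (hmem.mono heq).frequently)

theorem exists_differentiableOn_slopeSector {f : ℝ → E} {ρ C : ℝ} (hρ : 0 < ρ)
    (hf : ∀ t : ℝ, 0 < t → ∃ F : ℂ → E,
      DifferentiableOn ℂ F (Metric.ball (t : ℂ) (ρ * t)) ∧
      (∀ r : ℝ, (r : ℂ) ∈ Metric.ball (t : ℂ) (ρ * t) → F r = f r) ∧
      ∀ z ∈ Metric.ball (t : ℂ) (ρ * t), ‖F z‖ ≤ C) :
    ∃ S : ℂ → E, (∀ t : ℝ, 0 ≤ t → S t = f t) ∧ DifferentiableOn ℂ S (slopeSector ρ) ∧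
      ∀ z ∈ slopeSector ρ, ‖S z‖ ≤ C := by
  choose! F hFdiff hFreal hFbound using hf
  have hself : ∀ t : ℝ, 0 < t → (t : ℂ) ∈ Metric.ball (t : ℂ) (ρ * t) := fun t ht =>
    Metric.mem_ball_self (mul_pos hρ ht)
  have hre : ∀ z ∈ slopeSector ρ, 0 < z.re := fun z => re_pos_of_mem_slopeSector hρ
  refine ⟨fun z => if 0 < z.re then F z.re z else f 0, fun t ht => ?_, fun z₀ hz₀ => ?_,
    fun z hz => ?_⟩
  · rcases ht.eq_or_lt with rfl | ht
    · simp
    · simpa [ht] using hFreal t ht t (hself t ht)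
  · have hball := Metric.isOpen_ball.mem_nhds (mem_ball_re_of_mem_slopeSector hz₀)
    refine (((hFdiff _ (hre z₀ hz₀)).differentiableAt hball).congr_of_eventuallyEq
      ?_).differentiableWithinAt
    filter_upwards [(isOpen_slopeSector ρ).mem_nhds hz₀, hball] with z hz hz_ball
    have hz_re : (z.re : ℂ) ∈ Metric.ball (z₀.re : ℂ) (ρ * z₀.re) := by
      rw [mem_ball_iff_norm] at hz_ball ⊢
      refine (Eq.trans_le ?_ (Complex.abs_re_le_norm (z - z₀.re))).trans_lt hz_ball
      simp [← Complex.ofReal_sub]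
    rw [if_pos (hre z hz)]
    exact eqOn_of_eq_ofReal (Metric.isOpen_ball.inter Metric.isOpen_ball)
      ((convex_ball _ _).inter (convex_ball _ _)).isPreconnected
      ((hFdiff _ (hre z hz)).mono inter_subset_left)
      ((hFdiff _ (hre z₀ hz₀)).mono inter_subset_right) ⟨hself _ (hre z hz), hz_re⟩
      (fun r hr => (hFreal _ (hre z hz) r hr.1).trans (hFreal _ (hre z₀ hz₀) r hr.2).symm)
      ⟨mem_ball_re_of_mem_slopeSector hz, hz_ball⟩
  · simp only [hre z hz, if_true]
    exact hFbound _ (hre z hz) z (mem_ball_re_of_mem_slopeSector hz)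

end HolomorphicFunctions

section BanachAlgebra

variable {R : Type*} [NormedRing R] [CompleteSpace R]

theorem norm_inverse_one_sub_le (h1 : ‖(1 : R)‖ ≤ 1) {a : R} (ha : ‖a‖ < 1) :
    ‖Ring.inverse (1 - a)‖ ≤ (1 - ‖a‖)⁻¹ := by
  rw [NormedRing.inverse_one_sub a ha]
  exact (tsum_geometric_le_of_norm_lt_one a ha).trans (by linarith)

end BanachAlgebra

section LaplaceTransform

variable {X : Type u} [NormedAddCommGroup X] [NormedSpace ℂ X] {T : ℝ → X →L[ℂ] X}
  {M : ℝ} {l n : ℂ}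

theorem norm_cexp_neg_mul_ofReal (l : ℂ) (t : ℝ) :
    ‖Complex.exp (-l * t)‖ = Real.exp (-l.re * t) := by
  simp [Complex.norm_exp]

theorem hasDerivAt_cexp_mul_ofReal (l : ℂ) (t : ℝ) :
    HasDerivAt (fun s : ℝ => Complex.exp (l * s)) (l * Complex.exp (l * t)) t := by
  simpa [mul_comm] using ((Complex.ofRealCLM.hasDerivAt (x := t)).const_mul l).cexp

/-- The Laplace transform of the orbit of `x`; for a bounded semigroup and `0 < l.re` it is
`(l - A)⁻¹ x`, where `A` is the generator. -/
noncomputable def laplaceOrbit (T : ℝ → X →L[ℂ] X) (l : ℂ) (x : X) : X :=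
  ∫ t in Ioi (0 : ℝ), Complex.exp (-l * t) • T t x

open Classical in
/-- The resolvent `(l - A)⁻¹` of the generator `A` as a bounded operator, with the value `0` when
the Laplace transform does not define one. -/
noncomputable def semigroupResolvent (T : ℝ → X →L[ℂ] X) (l : ℂ) : X →L[ℂ] X :=
  if h : IsBoundedLinearMap ℂ (laplaceOrbit T l) then h.toContinuousLinearMap else 0

theorem norm_cexp_smul_apply_le (hM : ∀ t : ℝ, 0 ≤ t → ‖T t‖ ≤ M) (l : ℂ) (x : X) {t : ℝ}
    (ht : 0 ≤ t) : ‖Complex.exp (-l * t) • T t x‖ ≤ M * ‖x‖ * Real.exp (-l.re * t) := by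
  rw [norm_smul, norm_cexp_neg_mul_ofReal, mul_comm]
  gcongr
  exact (T t).le_of_opNorm_le (hM t ht) x

theorem norm_ofReal_smul_cexp_smul_apply_le (hM : ∀ t : ℝ, 0 ≤ t → ‖T t‖ ≤ M) (l : ℂ) (x : X)
    {t : ℝ} (ht : 0 ≤ t) : ‖(t : ℂ) • Complex.exp (-l * t) • T t x‖ ≤
      M * ‖x‖ * (t ^ (1 : ℝ) * Real.exp (-l.re * t)) := by
  rw [norm_smul, Complex.norm_of_nonneg ht, Real.rpow_one, mul_left_comm]
  gcongr
  exact norm_cexp_smul_apply_le hM l x ht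

theorem tendsto_cexp_smul_apply_atTop (hM : ∀ t : ℝ, 0 ≤ t → ‖T t‖ ≤ M) (hl : 0 < l.re) (x : X) :
    Tendsto (fun t : ℝ => Complex.exp (-l * t) • T t x) atTop (𝓝 0) := by
  have hexp : Tendsto (fun t : ℝ => M * ‖x‖ * Real.exp (-l.re * t)) atTop (𝓝 0) := by
    simpa using (Real.tendsto_exp_atBot.comp
      (tendsto_id.const_mul_atTop_of_neg (neg_neg_of_pos hl))).const_mul (M * ‖x‖)
  refine squeeze_zero_norm' ?_ hexp
  filter_upwards [eventually_ge_atTop 0] with t ht using norm_cexp_smul_apply_le hM l x ht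

theorem tendsto_ofReal_smul_cexp_smul_apply_atTop (hM : ∀ t : ℝ, 0 ≤ t → ‖T t‖ ≤ M)
    (hl : 0 < l.re) (x : X) :
    Tendsto (fun t : ℝ => (t : ℂ) • Complex.exp (-l * t) • T t x) atTop (𝓝 0) := by
  have hexp := (tendsto_rpow_mul_exp_neg_mul_atTop_nhds_zero 1 l.re hl).const_mul (M * ‖x‖)
  rw [mul_zero] at hexp
  refine squeeze_zero_norm' ?_ hexp
  filter_upwards [eventually_ge_atTop 0] with t ht
    using norm_ofReal_smul_cexp_smul_apply_le hM l x ht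

theorem norm_laplaceOrbit_le (hM : ∀ t : ℝ, 0 ≤ t → ‖T t‖ ≤ M) (hl : 0 < l.re) (x : X) :
    ‖laplaceOrbit T l x‖ ≤ M / l.re * ‖x‖ := by
  calc ‖laplaceOrbit T l x‖ ≤ ∫ t in Ioi (0 : ℝ), M * ‖x‖ * Real.exp (-l.re * t) :=
        norm_integral_le_of_norm_le ((exp_neg_integrableOn_Ioi 0 hl).const_mul _)
          (ae_restrict_of_forall_mem measurableSet_Ioi fun t ht =>
            norm_cexp_smul_apply_le hM l x (le_of_lt ht))
    _ = M / l.re * ‖x‖ := by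
        rw [integral_const_mul, integral_exp_mul_Ioi (neg_neg_of_pos hl), mul_zero, Real.exp_zero,
          neg_div_neg_eq]
        ring

theorem laplaceOrbit_comp_mul_left (T : ℝ → X →L[ℂ] X) {r : ℝ} (hr : 0 < r) (l : ℂ) (x : X) :
    laplaceOrbit (fun t => T (r * t)) l x = (r : ℂ)⁻¹ • laplaceOrbit T (l / r) x := by
  have hrc : (r : ℂ) ≠ 0 := Complex.ofReal_ne_zero.2 hr.ne'
  have h := integral_comp_mul_left_Ioi (fun t : ℝ => Complex.exp (-(l / r) * t) • T t x) 0 hr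
  rw [mul_zero] at h
  rw [laplaceOrbit, laplaceOrbit, ← Complex.ofReal_inv, Complex.coe_smul, ← h]
  congr 1 with t
  congr 2
  push_cast
  field_simp

namespace IsC0Semigroup

theorem add_apply (hT : IsC0Semigroup T) {s t : ℝ} (hs : 0 ≤ s) (ht : 0 ≤ t) (x : X) :
    T (s + t) x = T s (T t x) := by
  rw [hT.2.1 s t hs ht, ContinuousLinearMap.comp_apply]

theorem norm_apply_sub_apply_le_s4 (hT : IsC0Semigroup T) (hM : ∀ t : ℝ, 0 ≤ t → ‖T t‖ ≤ M) (x : X)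
    {s t : ℝ} (hs : 0 ≤ s) (ht : 0 ≤ t) : ‖T s x - T t x‖ ≤ M * ‖T |s - t| x - x‖ := by
  wlog hst : t ≤ s generalizing s t
  · rw [norm_sub_rev, abs_sub_comm]
    exact this ht hs (le_of_not_ge hst)
  have hadd := hT.add_apply ht (sub_nonneg.2 hst) x
  rw [add_sub_cancel] at hadd
  rw [hadd, ← map_sub, abs_of_nonneg (sub_nonneg.2 hst)]
  exact (T t).le_of_opNorm_le (hM t ht) _

theorem continuousOn_apply_s4 (hT : IsC0Semigroup T) (hM : ∀ t : ℝ, 0 ≤ t → ‖T t‖ ≤ M) (x : X) :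
    ContinuousOn (fun t => T t x) (Ici 0) := by
  have hzero : Tendsto (fun t => T t x) (𝓝[≥] 0) (𝓝 x) := by
    have h : ContinuousWithinAt (fun t => T t x) (Ioi 0) 0 := by
      simpa [ContinuousWithinAt, hT.1] using hT.2.2 x
    simpa [ContinuousWithinAt, hT.1] using continuousWithinAt_Ioi_iff_Ici.1 h
  intro t ht
  have habs : Tendsto (fun s : ℝ => |s - t|) (𝓝[Ici 0] t) (𝓝[≥] 0) := by
    have h : Tendsto (fun s : ℝ => |s - t|) (𝓝 t) (𝓝 0) := by
      simpa using (by fun_prop : Continuous fun s : ℝ => |s - t|).tendsto t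
    exact tendsto_nhdsWithin_iff.2 ⟨h.mono_left nhdsWithin_le_nhds,
      .of_forall fun s => mem_Ici.2 (abs_nonneg (s - t))⟩
  have hlim : Tendsto (fun s => M * ‖T |s - t| x - x‖) (𝓝[Ici 0] t) (𝓝 0) := by
    simpa using ((hzero.comp habs).sub_const x).norm.const_mul M
  refine tendsto_iff_norm_sub_tendsto_zero.2 (squeeze_zero'
    (.of_forall fun _ => norm_nonneg _) ?_ hlim)
  filter_upwards [self_mem_nhdsWithin] with s hs using hT.norm_apply_sub_apply_le_s4 hM x hs ht

theorem comp_mul_left (hT : IsC0Semigroup T) {r : ℝ} (hr : 0 < r) :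
    IsC0Semigroup fun t => T (r * t) := by
  refine ⟨by simpa using hT.1, fun s t hs ht => ?_, fun x => (hT.2.2 x).comp ?_⟩
  · simp only [mul_add]
    exact hT.2.1 _ _ (by positivity) (by positivity)
  · have h : Tendsto (fun t : ℝ => r * t) (𝓝 0) (𝓝 0) := by
      simpa using (continuous_const_mul r).tendsto 0
    exact tendsto_nhdsWithin_iff.2 ⟨h.mono_left nhdsWithin_le_nhds,
      eventually_mem_nhdsWithin.mono fun t ht => mul_pos hr ht⟩

theorem continuousOn_cexp_smul (hT : IsC0Semigroup T) (hM : ∀ t : ℝ, 0 ≤ t → ‖T t‖ ≤ M) (l : ℂ)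
    (x : X) : ContinuousOn (fun t : ℝ => Complex.exp (-l * t) • T t x) (Ici 0) :=
  (by fun_prop : Continuous fun t : ℝ => Complex.exp (-l * t)).continuousOn.smul
    (hT.continuousOn_apply_s4 hM x)

theorem integrableOn_cexp_smul (hT : IsC0Semigroup T) (hM : ∀ t : ℝ, 0 ≤ t → ‖T t‖ ≤ M)
    (hl : 0 < l.re) (x : X) {a : ℝ} (ha : 0 ≤ a) :
    IntegrableOn (fun t : ℝ => Complex.exp (-l * t) • T t x) (Ioi a) :=
  ((exp_neg_integrableOn_Ioi a hl).const_mul (M * ‖x‖)).mono'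
    (((hT.continuousOn_cexp_smul hM l x).mono fun _ ht =>
      ha.trans (le_of_lt ht)).aestronglyMeasurable measurableSet_Ioi)
    (ae_restrict_of_forall_mem measurableSet_Ioi fun _ ht =>
      norm_cexp_smul_apply_le hM l x (ha.trans (le_of_lt ht)))

theorem integrableOn_ofReal_smul_cexp_smul (hT : IsC0Semigroup T)
    (hM : ∀ t : ℝ, 0 ≤ t → ‖T t‖ ≤ M) (hl : 0 < l.re) (x : X) :
    IntegrableOn (fun t : ℝ => (t : ℂ) • Complex.exp (-l * t) • T t x) (Ioi 0) := by
  have hexp : IntegrableOn (fun t : ℝ => t ^ (1 : ℝ) * Real.exp (-l.re * t)) (Ioi 0) := by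
    simpa using integrableOn_rpow_mul_exp_neg_mul_rpow (s := 1) (p := 1) (by norm_num) one_pos hl
  exact (hexp.const_mul (M * ‖x‖)).mono'
    ((Complex.continuous_ofReal.continuousOn.smul ((hT.continuousOn_cexp_smul hM l x).mono
      Ioi_subset_Ici_self)).aestronglyMeasurable measurableSet_Ioi)
    (ae_restrict_of_forall_mem measurableSet_Ioi fun _ ht =>
      norm_ofReal_smul_cexp_smul_apply_le hM l x (le_of_lt ht))

theorem isBoundedLinearMap_laplaceOrbit (hT : IsC0Semigroup T) (hM : ∀ t : ℝ, 0 ≤ t → ‖T t‖ ≤ M)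
    (hl : 0 < l.re) : IsBoundedLinearMap ℂ (laplaceOrbit T l) := by
  refine IsLinearMap.with_bound ⟨fun x y => ?_, fun c x => ?_⟩ (M / l.re)
    (norm_laplaceOrbit_le hM hl)
  · simp only [laplaceOrbit, map_add, smul_add]
    exact integral_add (hT.integrableOn_cexp_smul hM hl x le_rfl)
      (hT.integrableOn_cexp_smul hM hl y le_rfl)
  · simp only [laplaceOrbit, map_smul, smul_comm _ c]
    exact integral_smul c _

theorem semigroupResolvent_apply (hT : IsC0Semigroup T) (hM : ∀ t : ℝ, 0 ≤ t → ‖T t‖ ≤ M)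
    (hl : 0 < l.re) (x : X) :
    semigroupResolvent T l x = ∫ t in Ioi (0 : ℝ), Complex.exp (-l * t) • T t x := by
  rw [semigroupResolvent, dif_pos (hT.isBoundedLinearMap_laplaceOrbit hM hl)]
  rfl

theorem norm_semigroupResolvent_le (hT : IsC0Semigroup T) (hM : ∀ t : ℝ, 0 ≤ t → ‖T t‖ ≤ M)
    (hl : 0 < l.re) : ‖semigroupResolvent T l‖ ≤ M / l.re := by
  have hM0 : 0 ≤ M := (norm_nonneg _).trans (hM 0 le_rfl)
  refine ContinuousLinearMap.opNorm_le_bound _ (by positivity) fun x => ?_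
  rw [hT.semigroupResolvent_apply hM hl]
  exact norm_laplaceOrbit_le hM hl x

theorem semigroupResolvent_comp_mul_left (hT : IsC0Semigroup T)
    (hM : ∀ t : ℝ, 0 ≤ t → ‖T t‖ ≤ M) {r : ℝ} (hr : 0 < r) (hl : 0 < l.re) :
    semigroupResolvent (fun t => T (r * t)) l = (r : ℂ)⁻¹ • semigroupResolvent T (l / r) := by
  have hlr : 0 < (l / r).re := by rw [Complex.div_ofReal_re]; positivity
  ext x
  rw [(hT.comp_mul_left hr).semigroupResolvent_apply (fun t ht => hM _ (by positivity)) hl,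
    smul_apply, hT.semigroupResolvent_apply hM hlr]
  exact laplaceOrbit_comp_mul_left T hr l x

variable [CompleteSpace X]

theorem apply_semigroupResolvent (hT : IsC0Semigroup T) (hM : ∀ t : ℝ, 0 ≤ t → ‖T t‖ ≤ M)
    (hl : 0 < l.re) (x : X) {h : ℝ} (hh : 0 ≤ h) :
    T h (semigroupResolvent T l x) = Complex.exp (l * h) •
      (semigroupResolvent T l x - ∫ t in (0 : ℝ)..h, Complex.exp (-l * t) • T t x) := by
  have htail : semigroupResolvent T l x - ∫ t in (0 : ℝ)..h, Complex.exp (-l * t) • T t x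
      = ∫ t in Ioi h, Complex.exp (-l * t) • T t x := by
    rw [hT.semigroupResolvent_apply hM hl, sub_eq_iff_eq_add',
      intervalIntegral.integral_interval_add_Ioi (hT.integrableOn_cexp_smul hM hl x le_rfl)
        (hT.integrableOn_cexp_smul hM hl x hh)]
  have hshift : ∫ t in Ioi h, Complex.exp (-l * t) • T t x
      = ∫ t in Ioi (0 : ℝ), Complex.exp (-l * (t + h : ℝ)) • T (t + h) x := by
    rw [← integral_indicator measurableSet_Ioi, ← integral_indicator measurableSet_Ioi,
      ← integral_add_right_eq_self _ h]
    congr 1 with t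
    simp [indicator]
  rw [htail, hshift, ← integral_smul, hT.semigroupResolvent_apply hM hl,
    ← ContinuousLinearMap.integral_comp_comm _ (hT.integrableOn_cexp_smul hM hl x le_rfl)]
  refine setIntegral_congr_fun measurableSet_Ioi fun t (ht : 0 < t) => ?_
  simp only [map_smul, smul_smul, ← Complex.exp_add, add_comm t h, hT.add_apply hh ht.le]
  congr 2
  push_cast
  ring

theorem hasDerivAt_apply_semigroupResolvent (hT : IsC0Semigroup T)
    (hM : ∀ t : ℝ, 0 ≤ t → ‖T t‖ ≤ M) (hl : 0 < l.re) (x : X) {t : ℝ} (ht : 0 < t) :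
    HasDerivAt (fun s : ℝ => T s (semigroupResolvent T l x))
      (T t (l • semigroupResolvent T l x - x)) t := by
  have hcont := hT.continuousOn_cexp_smul hM l x
  have hint : HasDerivAt (fun h : ℝ => ∫ s in (0 : ℝ)..h, Complex.exp (-l * s) • T s x)
      (Complex.exp (-l * t) • T t x) t :=
    intervalIntegral.integral_hasDerivAt_right
      ((hcont.mono (by rw [uIcc_of_le ht.le]; exact Icc_subset_Ici_self)).intervalIntegrable)
      (hcont.mono Ioi_subset_Ici_self |>.stronglyMeasurableAtFilter isOpen_Ioi t ht)
      (hcont.continuousAt (Ici_mem_nhds ht))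
  have hprod := (hasDerivAt_cexp_mul_ofReal l t).smul (hint.const_sub (semigroupResolvent T l x))
  refine (hprod.congr_of_eventuallyEq ?_).congr_deriv ?_
  · filter_upwards [lt_mem_nhds ht] with s hs using hT.apply_semigroupResolvent hM hl x hs.le
  · rw [map_sub, map_smul, hT.apply_semigroupResolvent hM hl x ht.le, smul_neg, smul_smul,
      ← Complex.exp_add, neg_mul, add_neg_cancel, Complex.exp_zero, one_smul, mul_smul]
    abel

theorem semigroupResolvent_sub_semigroupResolvent (hT : IsC0Semigroup T)
    (hM : ∀ t : ℝ, 0 ≤ t → ‖T t‖ ≤ M) (hl : 0 < l.re) (hn : 0 < n.re) :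
    semigroupResolvent T l - semigroupResolvent T n =
      (n - l) • (semigroupResolvent T n * semigroupResolvent T l) := by
  ext x
  set y := semigroupResolvent T l x with hy
  have hderiv : ∀ t ∈ Ioi (0 : ℝ), HasDerivAt (fun t : ℝ => Complex.exp (-n * t) • T t y)
      (Complex.exp (-n * t) • T t ((l - n) • y - x)) t := fun t ht => by
    refine ((hasDerivAt_cexp_mul_ofReal (-n) t).smul
      (hT.hasDerivAt_apply_semigroupResolvent hM hl x ht)).congr_deriv ?_
    simp only [map_sub, map_smul]
    module
  have hftc := integral_Ioi_of_hasDerivAt_of_tendsto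
    ((hT.continuousOn_cexp_smul hM n y).continuousWithinAt self_mem_Ici) hderiv
    (hT.integrableOn_cexp_smul hM hn _ le_rfl) (tendsto_cexp_smul_apply_atTop hM hn y)
  rw [← hT.semigroupResolvent_apply hM hn, map_sub, map_smul] at hftc
  simp only [Complex.ofReal_zero, mul_zero, Complex.exp_zero, one_smul, hT.1, one_apply_eq_self,
    zero_sub] at hftc
  rw [sub_apply, smul_apply, mul_apply_eq_comp, ← hy, ← neg_sub l n, neg_smul,
    sub_eq_iff_eq_add.1 hftc]
  abel

theorem semigroupResolvent_semigroupResolvent_apply (hT : IsC0Semigroup T)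
    (hM : ∀ t : ℝ, 0 ≤ t → ‖T t‖ ≤ M) (hl : 0 < l.re) (x : X) :
    semigroupResolvent T l (semigroupResolvent T l x) =
      ∫ t in Ioi (0 : ℝ), (t : ℂ) • Complex.exp (-l * t) • T t x := by
  set y := semigroupResolvent T l x with hy
  have hderiv : ∀ t ∈ Ioi (0 : ℝ),
      HasDerivAt (fun t : ℝ => (t : ℂ) • Complex.exp (-l * t) • T t y)
        (Complex.exp (-l * t) • T t y - (t : ℂ) • Complex.exp (-l * t) • T t x) t := fun t ht => by
    have hid : HasDerivAt (fun t : ℝ => (t : ℂ)) 1 t := (hasDerivAt_id t).ofReal_comp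
    refine (hid.smul ((hasDerivAt_cexp_mul_ofReal (-l) t).smul
      (hT.hasDerivAt_apply_semigroupResolvent hM hl x ht))).congr_deriv ?_
    simp only [map_sub, map_smul, ← hy, Pi.smul_apply']
    module
  have hint := hT.integrableOn_cexp_smul hM hl y le_rfl
  have hint' := hT.integrableOn_ofReal_smul_cexp_smul hM hl x
  have hftc := integral_Ioi_of_hasDerivAt_of_tendsto
    (f := fun t : ℝ => (t : ℂ) • Complex.exp (-l * t) • T t y)
    ((Complex.continuous_ofReal.continuousOn.smul (hT.continuousOn_cexp_smul hM l y)
      ).continuousWithinAt self_mem_Ici) hderiv (hint.sub hint')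
    (tendsto_ofReal_smul_cexp_smul_apply_atTop hM hl y)
  rw [integral_sub hint hint', ← hT.semigroupResolvent_apply hM hl, Complex.ofReal_zero, zero_smul,
    sub_zero] at hftc
  exact sub_eq_zero.1 hftc

theorem continuousOn_semigroupResolvent (hT : IsC0Semigroup T)
    (hM : ∀ t : ℝ, 0 ≤ t → ‖T t‖ ≤ M) :
    ContinuousOn (semigroupResolvent T) {l : ℂ | 0 < l.re} := by
  intro l (hl : 0 < l.re)
  have hbound : ContinuousAt (fun n : ℂ => ‖l - n‖ * (M / l.re * (M / n.re))) l := by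
    fun_prop (disch := exact hl.ne')
  rw [ContinuousWithinAt, tendsto_iff_norm_sub_tendsto_zero]
  refine squeeze_zero' (.of_forall fun _ => norm_nonneg _) ?_
    (tendsto_nhdsWithin_of_tendsto_nhds (by simpa [ContinuousAt] using hbound))
  filter_upwards [self_mem_nhdsWithin] with n (hn : 0 < n.re)
  rw [hT.semigroupResolvent_sub_semigroupResolvent hM hn hl, norm_smul]
  gcongr
  exact norm_mul_le_of_le (hT.norm_semigroupResolvent_le hM hl)
    (hT.norm_semigroupResolvent_le hM hn)

end IsC0Semigroup

end LaplaceTransform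

section NearIdentity

variable {X : Type u} [NormedAddCommGroup X] [NormedSpace ℂ X]

theorem mul_norm_le_norm_add_smul_apply {A : X →L[ℂ] X} {ε q : ℝ} (hε : 0 ≤ ε)
    (hA : ‖A - 1‖ ≤ 2 - ε) (hq0 : 0 ≤ q) (hq1 : q ≤ 1) (y : X) :
    ε / 2 * ‖y‖ ≤ ‖y + (q : ℂ) • A y‖ := by
  have hε2 : ε ≤ 2 := sub_nonneg.1 ((norm_nonneg _).trans hA)
  have hsplit : y + (q : ℂ) • A y = ((1 + q : ℝ) : ℂ) • y + (q : ℂ) • (A - 1) y := by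
    rw [sub_apply, one_apply_eq_self]
    push_cast
    module
  have hmain : ‖((1 + q : ℝ) : ℂ) • y‖ = (1 + q) * ‖y‖ := by
    rw [norm_smul, Complex.norm_of_nonneg (by positivity)]
  have hpert : ‖(q : ℂ) • (A - 1) y‖ ≤ q * ((2 - ε) * ‖y‖) := by
    rw [norm_smul, Complex.norm_of_nonneg hq0]
    gcongr
    exact (A - 1).le_of_opNorm_le hA y
  calc ε / 2 * ‖y‖ ≤ ((1 + q) - q * (2 - ε)) * ‖y‖ := by gcongr; nlinarith
    _ = (1 + q) * ‖y‖ - q * ((2 - ε) * ‖y‖) := by ring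
    _ ≤ ‖((1 + q : ℝ) : ℂ) • y‖ - ‖(q : ℂ) • (A - 1) y‖ := by rw [hmain]; gcongr
    _ ≤ ‖y + (q : ℂ) • A y‖ := by rw [hsplit]; exact norm_sub_le_norm_add _ _

theorem cexp_neg_mul_pi_div_abs_im {l : ℂ} (hl : l.im ≠ 0) :
    Complex.exp (-l * (π / |l.im| : ℝ)) = -(Real.exp (-l.re * (π / |l.im|)) : ℂ) := by
  have hsplit : -l * (π / |l.im| : ℝ) =
      ((-l.re * (π / |l.im|) : ℝ) : ℂ) + (-(l.im * (π / |l.im|)) : ℝ) * I := by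
    nth_rw 1 [← Complex.re_add_im l]
    push_cast
    ring
  have hphase : Complex.exp ((-(l.im * (π / |l.im|)) : ℝ) * I) = -1 := by
    rcases abs_choice l.im with h | h <;> rw [h]
    · rw [mul_div_cancel₀ _ hl]
      simp [Complex.exp_neg]
    · rw [div_neg, mul_neg, mul_div_cancel₀ _ hl, neg_neg, Complex.exp_pi_mul_I]
  rw [hsplit, Complex.exp_add, hphase, Complex.ofReal_exp, mul_neg_one]

theorem IsC0Semigroup.abs_im_mul_norm_semigroupResolvent_le [CompleteSpace X] {T : ℝ → X →L[ℂ] X}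
    (hT : IsC0Semigroup T) {M ε : ℝ} (hM : ∀ t : ℝ, 0 ≤ t → ‖T t‖ ≤ M) (hε : 0 < ε)
    (hnear : ∀ t : ℝ, 0 < t → ‖T t - 1‖ ≤ 2 - ε) {l : ℂ} (hl : 0 < l.re) :
    |l.im| * ‖semigroupResolvent T l‖ ≤ 2 * π * M / ε := by
  have hM0 : 0 ≤ M := (norm_nonneg _).trans (hM 0 le_rfl)
  rcases eq_or_ne l.im 0 with him | him
  · rw [him, abs_zero, zero_mul]
    positivity
  have him_pos : 0 < |l.im| := abs_pos.2 him
  rw [mul_comm, ← le_div_iff₀ him_pos]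
  refine ContinuousLinearMap.opNorm_le_bound _ (by positivity) fun x => ?_
  set h : ℝ := π / |l.im| with hh
  have hh_pos : 0 < h := by positivity
  set y := semigroupResolvent T l x with hy
  have hq1 : Real.exp (-l.re * h) ≤ 1 := Real.exp_le_one_iff.2 (by nlinarith)
  have hevol : y + (Real.exp (-l.re * h) : ℂ) • T h y =
      ∫ t in (0 : ℝ)..h, Complex.exp (-l * t) • T t x := by
    rw [← sub_neg_eq_add, ← neg_smul, ← cexp_neg_mul_pi_div_abs_im him, ← hh, hy,
      hT.apply_semigroupResolvent hM hl x hh_pos.le, smul_smul, ← Complex.exp_add, neg_mul,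
      neg_add_cancel, Complex.exp_zero, one_smul, sub_sub_cancel]
  have hint : ‖∫ t in (0 : ℝ)..h, Complex.exp (-l * t) • T t x‖ ≤ M * ‖x‖ * h := by
    refine (intervalIntegral.norm_integral_le_of_norm_le_const (C := M * ‖x‖)
      fun t ht => ?_).trans_eq (by rw [sub_zero, abs_of_pos hh_pos])
    rw [uIoc_of_le hh_pos.le] at ht
    refine (norm_cexp_smul_apply_le hM l x ht.1.le).trans
      (mul_le_of_le_one_right (by positivity) (Real.exp_le_one_iff.2 ?_))
    nlinarith [ht.1]
  have hlow : ε / 2 * ‖y‖ ≤ M * ‖x‖ * h :=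
    (mul_norm_le_norm_add_smul_apply hε.le (hnear h hh_pos) (Real.exp_pos _).le hq1 y).trans
      (hevol ▸ hint)
  calc ‖y‖ = 2 / ε * (ε / 2 * ‖y‖) := by field_simp
    _ ≤ 2 / ε * (M * ‖x‖ * h) := by gcongr
    _ = 2 * π * M / ε / |l.im| * ‖x‖ := by rw [hh]; ring

end NearIdentity

section InverseLaplaceTransform

variable {X : Type u} [NormedAddCommGroup X] [NormedSpace ℂ X] {T : ℝ → X →L[ℂ] X} {M K : ℝ}

/-- The parametrization `w ↦ 1 + 2πiw` of the line `Re μ = 1`, scaled so that `dw = dμ / 2πi`. -/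
noncomputable def verticalLine (w : ℝ) : ℂ := 1 + (2 * π * w : ℝ) * I

@[simp]
theorem verticalLine_re (w : ℝ) : (verticalLine w).re = 1 := by simp [verticalLine]

@[simp]
theorem verticalLine_im (w : ℝ) : (verticalLine w).im = 2 * π * w := by simp [verticalLine]

theorem verticalLine_re_pos (w : ℝ) : 0 < (verticalLine w).re := by simp

theorem continuous_verticalLine : Continuous verticalLine := by
  unfold verticalLine
  fun_prop

theorem integrable_two_mul_sq_mul_inv_one_add_sq (hM0 : 0 < M) (hK0 : 0 < K) :
    Integrable fun w : ℝ => 2 * M ^ 2 * (1 + (2 * π * M / K * w) ^ 2)⁻¹ :=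
  (integrable_inv_one_add_sq.comp_mul_left' (by positivity)).const_mul _

theorem integral_two_mul_sq_mul_inv_one_add_sq (hM0 : 0 < M) (hK0 : 0 < K) :
    ∫ w : ℝ, 2 * M ^ 2 * (1 + (2 * π * M / K * w) ^ 2)⁻¹ = M * K := by
  rw [integral_const_mul, Measure.integral_comp_mul_left (fun x : ℝ => (1 + x ^ 2)⁻¹),
    integral_univ_inv_one_add_sq, abs_of_pos (by positivity), smul_eq_mul]
  field_simp

/-- The function `t ↦ t e⁻ᵗ T(t) x` on the half-line, extended by zero; its Fourier transform is
the squared resolvent on the line `Re μ = 1`. -/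
noncomputable def weightedOrbit (T : ℝ → X →L[ℂ] X) (x : X) : ℝ → X :=
  (Ioi 0).indicator fun t => (t : ℂ) • Complex.exp (-1 * t) • T t x

namespace IsC0Semigroup

theorem continuous_weightedOrbit (hT : IsC0Semigroup T) (hM : ∀ t : ℝ, 0 ≤ t → ‖T t‖ ≤ M)
    (x : X) : Continuous (weightedOrbit T x) := by
  refine continuous_indicator (fun t ht => ?_) ?_
  · rw [frontier_Ioi, mem_singleton_iff] at ht
    simp [ht]
  · rw [closure_Ioi]
    exact Complex.continuous_ofReal.continuousOn.smul (hT.continuousOn_cexp_smul hM 1 x)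

theorem integrable_weightedOrbit (hT : IsC0Semigroup T) (hM : ∀ t : ℝ, 0 ≤ t → ‖T t‖ ≤ M)
    (x : X) : Integrable (weightedOrbit T x) :=
  (integrable_indicator_iff measurableSet_Ioi).2
    (hT.integrableOn_ofReal_smul_cexp_smul hM (by simp) x)

theorem norm_semigroupResolvent_verticalLine_sq_le (hT : IsC0Semigroup T)
    (hM : ∀ t : ℝ, 0 ≤ t → ‖T t‖ ≤ M) (hM0 : 0 < M) (hK0 : 0 < K)
    (hK : ∀ l : ℂ, 0 < l.re → |l.im| * ‖semigroupResolvent T l‖ ≤ K) (w : ℝ) :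
    ‖semigroupResolvent T (verticalLine w)‖ ^ 2 ≤
      2 * M ^ 2 * (1 + (2 * π * M / K * w) ^ 2)⁻¹ := by
  have hre := hT.norm_semigroupResolvent_le hM (verticalLine_re_pos w)
  have him := hK _ (verticalLine_re_pos w)
  rw [verticalLine_re, div_one] at hre
  rw [verticalLine_im] at him
  set j := ‖semigroupResolvent T (verticalLine w)‖
  have hj_sq : j ^ 2 ≤ M ^ 2 := by gcongr
  have hwj_sq : (2 * π * w) ^ 2 * j ^ 2 ≤ K ^ 2 := by
    rw [← sq_abs (2 * π * w), ← mul_pow]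
    gcongr
  rw [← div_eq_mul_inv, le_div_iff₀ (by positivity)]
  calc j ^ 2 * (1 + (2 * π * M / K * w) ^ 2)
      = j ^ 2 + M ^ 2 / K ^ 2 * ((2 * π * w) ^ 2 * j ^ 2) := by ring
    _ ≤ M ^ 2 + M ^ 2 / K ^ 2 * K ^ 2 := by gcongr
    _ = 2 * M ^ 2 := by field_simp; norm_num

variable [CompleteSpace X]

theorem continuous_semigroupResolvent_verticalLine (hT : IsC0Semigroup T)
    (hM : ∀ t : ℝ, 0 ≤ t → ‖T t‖ ≤ M) :
    Continuous fun w => semigroupResolvent T (verticalLine w) :=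
  (hT.continuousOn_semigroupResolvent hM).comp_continuous continuous_verticalLine
    verticalLine_re_pos

theorem fourier_weightedOrbit (hT : IsC0Semigroup T) (hM : ∀ t : ℝ, 0 ≤ t → ‖T t‖ ≤ M) (x : X)
    (w : ℝ) : 𝓕 (weightedOrbit T x) w = (semigroupResolvent T (verticalLine w) ^ 2) x := by
  rw [sq, mul_apply_eq_comp,
    hT.semigroupResolvent_semigroupResolvent_apply hM (verticalLine_re_pos w),
    Real.fourier_real_eq_integral_exp_smul, ← integral_indicator measurableSet_Ioi]
  congr 1 with t
  by_cases ht : t ∈ Ioi (0 : ℝ)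
  · rw [weightedOrbit, indicator_of_mem ht, indicator_of_mem ht, smul_comm,
      smul_smul (Complex.exp _), ← Complex.exp_add]
    congr 3
    rw [verticalLine]
    push_cast
    ring
  · simp [weightedOrbit, indicator_of_notMem ht]

theorem apply_one_eq_integral_verticalLine (hT : IsC0Semigroup T)
    (hM : ∀ t : ℝ, 0 ≤ t → ‖T t‖ ≤ M) (hM0 : 0 < M) (hK0 : 0 < K)
    (hK : ∀ l : ℂ, 0 < l.re → |l.im| * ‖semigroupResolvent T l‖ ≤ K) (x : X) :
    T 1 x = ∫ w : ℝ, Complex.exp (verticalLine w) •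
      (semigroupResolvent T (verticalLine w) ^ 2) x := by
  have hfourier := funext (hT.fourier_weightedOrbit hM x)
  have hint : Integrable (𝓕 (weightedOrbit T x)) := by
    rw [hfourier]
    refine ((integrable_two_mul_sq_mul_inv_one_add_sq hM0 hK0).mul_const ‖x‖).mono' ?_
      (.of_forall fun w => ?_)
    · exact (((hT.continuous_semigroupResolvent_verticalLine hM).pow 2).clm_apply
        continuous_const).aestronglyMeasurable
    · exact ContinuousLinearMap.le_of_opNorm_le _ ((norm_pow_le' _ two_pos).trans
        (hT.norm_semigroupResolvent_verticalLine_sq_le hM hM0 hK0 hK w)) x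
  have hinv := congrFun ((hT.continuous_weightedOrbit hM x).fourierInv_fourier_eq
    (hT.integrable_weightedOrbit hM x) hint) 1
  rw [Real.fourierInv_eq', hfourier] at hinv
  have hone : weightedOrbit T x 1 = Complex.exp (-1) • T 1 x := by simp [weightedOrbit]
  calc T 1 x = Complex.exp 1 • weightedOrbit T x 1 := by
        rw [hone, smul_smul, ← Complex.exp_add]; simp
    _ = _ := by
        rw [← hinv, ← integral_smul]
        congr 1 with w
        rw [smul_smul, ← Complex.exp_add]
        simp [verticalLine]

end IsC0Semigroup

end InverseLaplaceTransform

section DunfordIntegral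

variable {X : Type u} [NormedAddCommGroup X] [NormedSpace ℂ X] {T : ℝ → X →L[ℂ] X} {M K : ℝ}
  {l z : ℂ}

/-- The resolvent `(l - zA)⁻¹` of the rotated generator, written as
`(l - A)⁻¹ (1 - (z - 1) A (l - A)⁻¹)⁻¹` so that it makes sense for complex `z` near `1`. -/
noncomputable def dilatedResolvent (T : ℝ → X →L[ℂ] X) (z l : ℂ) : X →L[ℂ] X :=
  semigroupResolvent T l * Ring.inverse (1 - (z - 1) • (l • semigroupResolvent T l - 1))

/-- The operator `e^{zA}` for `z` near `1`, as the Dunford integral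
`(2πi)⁻¹ ∫ e^μ (μ - zA)⁻² dμ` over the line `Re μ = 1`. -/
noncomputable def dunfordSemigroup (T : ℝ → X →L[ℂ] X) (z : ℂ) : X →L[ℂ] X :=
  ∫ w : ℝ, Complex.exp (verticalLine w) • dilatedResolvent T z (verticalLine w) ^ 2

theorem norm_sub_one_smul_lt {E : Type*} [NormedAddCommGroup E] [NormedSpace ℂ E] {a : E} {β : ℝ}
    (hβ : 0 < β) (ha : ‖a‖ ≤ β) (hz : z ∈ Metric.ball (1 : ℂ) (2 * β)⁻¹) :
    ‖(z - 1) • a‖ < 1 / 2 := by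
  rw [mem_ball_iff_norm] at hz
  calc ‖(z - 1) • a‖ ≤ ‖z - 1‖ * β := by rw [norm_smul]; gcongr
    _ < (2 * β)⁻¹ * β := by gcongr
    _ = 1 / 2 := by field_simp

namespace IsC0Semigroup

theorem norm_smul_semigroupResolvent_sub_one_le (hT : IsC0Semigroup T)
    (hM : ∀ t : ℝ, 0 ≤ t → ‖T t‖ ≤ M)
    (hK : ∀ l : ℂ, 0 < l.re → |l.im| * ‖semigroupResolvent T l‖ ≤ K) (hl : 0 < l.re) :
    ‖l • semigroupResolvent T l - 1‖ ≤ M + K + 1 := by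
  refine norm_sub_le_of_le ?_ ContinuousLinearMap.norm_id_le
  calc ‖l • semigroupResolvent T l‖
      ≤ (|l.re| + |l.im|) * ‖semigroupResolvent T l‖ := by
        rw [norm_smul]; gcongr; exact Complex.norm_le_abs_re_add_abs_im l
    _ = ‖semigroupResolvent T l‖ * l.re + |l.im| * ‖semigroupResolvent T l‖ := by
        rw [abs_of_pos hl]; ring
    _ ≤ M + K := add_le_add ((le_div_iff₀ hl).1 (hT.norm_semigroupResolvent_le hM hl)) (hK l hl)

theorem norm_sub_one_smul_verticalLine_lt (hT : IsC0Semigroup T)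
    (hM : ∀ t : ℝ, 0 ≤ t → ‖T t‖ ≤ M) (hM0 : 0 < M) (hK0 : 0 < K)
    (hK : ∀ l : ℂ, 0 < l.re → |l.im| * ‖semigroupResolvent T l‖ ≤ K)
    (hz : z ∈ Metric.ball (1 : ℂ) (2 * (M + K + 1))⁻¹) (w : ℝ) :
    ‖(z - 1) • (verticalLine w • semigroupResolvent T (verticalLine w) - 1)‖ < 1 / 2 :=
  norm_sub_one_smul_lt (by positivity)
    (hT.norm_smul_semigroupResolvent_sub_one_le hM hK (verticalLine_re_pos w)) hz

theorem abs_im_mul_norm_semigroupResolvent_comp_mul_left_le (hT : IsC0Semigroup T)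
    (hM : ∀ t : ℝ, 0 ≤ t → ‖T t‖ ≤ M)
    (hK : ∀ l : ℂ, 0 < l.re → |l.im| * ‖semigroupResolvent T l‖ ≤ K) {r : ℝ} (hr : 0 < r)
    (hl : 0 < l.re) : |l.im| * ‖semigroupResolvent (fun t => T (r * t)) l‖ ≤ K := by
  have h := hK (l / r) (by rw [Complex.div_ofReal_re]; positivity)
  rw [Complex.div_ofReal_im, abs_div, abs_of_pos hr, div_mul_eq_mul_div₀] at h
  rwa [hT.semigroupResolvent_comp_mul_left hM hr hl, norm_smul, norm_inv,
    Complex.norm_of_nonneg hr.le, mul_left_comm, ← div_eq_inv_mul]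

variable [CompleteSpace X]

theorem dilatedResolvent_ofReal (hT : IsC0Semigroup T) (hM : ∀ t : ℝ, 0 ≤ t → ‖T t‖ ≤ M)
    (hl : 0 < l.re) {r : ℝ} (hr : 0 < r)
    (hsmall : ‖((r : ℂ) - 1) • (l • semigroupResolvent T l - 1)‖ < 1) :
    dilatedResolvent T r l = semigroupResolvent (fun t => T (r * t)) l := by
  have hrc : (r : ℂ) ≠ 0 := Complex.ofReal_ne_zero.2 hr.ne'
  have hlr : 0 < (l / r).re := by rw [Complex.div_ofReal_re]; positivity
  have hilbert := hT.semigroupResolvent_sub_semigroupResolvent hM hl hlr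
  rw [hT.semigroupResolvent_comp_mul_left hM hr hl, dilatedResolvent, eq_comm,
    Ring.eq_mul_inverse_iff_mul_eq _ _ _ (isUnit_one_sub_of_norm_lt_one hsmall)]
  refine Eq.trans ?_ (sub_eq_iff_eq_add.1 hilbert).symm
  simp only [mul_sub, mul_one, smul_mul_assoc, mul_smul_comm]
  match_scalars <;> field_simp <;> ring

theorem continuous_dilatedResolvent_verticalLine (hT : IsC0Semigroup T)
    (hM : ∀ t : ℝ, 0 ≤ t → ‖T t‖ ≤ M)
    (hsmall : ∀ w, ‖(z - 1) • (verticalLine w • semigroupResolvent T (verticalLine w) - 1)‖ < 1) :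
    Continuous fun w => dilatedResolvent T z (verticalLine w) := by
  have hR := hT.continuous_semigroupResolvent_verticalLine hM
  have hB : Continuous fun w =>
      1 - (z - 1) • (verticalLine w • semigroupResolvent T (verticalLine w) - 1) :=
    continuous_const.sub
      (((continuous_verticalLine.smul hR).sub continuous_const).const_smul (z - 1))
  refine hR.mul (continuous_iff_continuousAt.2 fun w => ?_)
  obtain ⟨v, hv⟩ := isUnit_one_sub_of_norm_lt_one (hsmall w)
  exact ContinuousAt.comp (g := Ring.inverse) (hv ▸ NormedRing.inverse_continuousAt v)
    hB.continuousAt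

end IsC0Semigroup

variable [CompleteSpace X]

theorem norm_dilatedResolvent_le
    (hsmall : ‖(z - 1) • (l • semigroupResolvent T l - 1)‖ ≤ 1 / 2) :
    ‖dilatedResolvent T z l‖ ≤ 2 * ‖semigroupResolvent T l‖ := by
  rw [mul_comm]
  refine norm_mul_le_of_le le_rfl ((norm_inverse_one_sub_le ContinuousLinearMap.norm_id_le
    (hsmall.trans_lt (by norm_num))).trans ?_)
  rw [inv_le_comm₀ (by linarith) two_pos]
  linarith

theorem differentiableAt_dilatedResolvent
    (hsmall : ‖(z - 1) • (l • semigroupResolvent T l - 1)‖ < 1) :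
    DifferentiableAt ℂ (fun z => dilatedResolvent T z l) z :=
  have hlin : DifferentiableAt ℂ
      (fun z : ℂ => 1 - (z - 1) • (l • semigroupResolvent T l - 1)) z := by
    fun_prop
  ((differentiableAt_inverse (isUnit_one_sub_of_norm_lt_one hsmall)).comp z hlin).const_mul _

theorem norm_cexp_smul_dilatedResolvent_sq_le {w : ℝ} (hsmall : ‖(z - 1) •
      (verticalLine w • semigroupResolvent T (verticalLine w) - 1)‖ ≤ 1 / 2) :
    ‖Complex.exp (verticalLine w) • dilatedResolvent T z (verticalLine w) ^ 2‖ ≤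
      4 * Real.exp 1 * ‖semigroupResolvent T (verticalLine w)‖ ^ 2 := by
  rw [norm_smul, Complex.norm_exp, verticalLine_re]
  calc Real.exp 1 * ‖dilatedResolvent T z (verticalLine w) ^ 2‖
      ≤ Real.exp 1 * (2 * ‖semigroupResolvent T (verticalLine w)‖) ^ 2 := by
        gcongr
        exact (norm_pow_le' _ two_pos).trans (by gcongr; exact norm_dilatedResolvent_le hsmall)
    _ = 4 * Real.exp 1 * ‖semigroupResolvent T (verticalLine w)‖ ^ 2 := by ring

namespace IsC0Semigroup

theorem continuous_dunfordSemigroup_integrand (hT : IsC0Semigroup T)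
    (hM : ∀ t : ℝ, 0 ≤ t → ‖T t‖ ≤ M) (hM0 : 0 < M) (hK0 : 0 < K)
    (hK : ∀ l : ℂ, 0 < l.re → |l.im| * ‖semigroupResolvent T l‖ ≤ K)
    (hz : z ∈ Metric.ball (1 : ℂ) (2 * (M + K + 1))⁻¹) :
    Continuous fun w =>
      Complex.exp (verticalLine w) • dilatedResolvent T z (verticalLine w) ^ 2 :=
  (Complex.continuous_exp.comp continuous_verticalLine).smul
    ((hT.continuous_dilatedResolvent_verticalLine hM fun w =>
      (hT.norm_sub_one_smul_verticalLine_lt hM hM0 hK0 hK hz w).trans one_half_lt_one).pow 2)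

theorem norm_dunfordSemigroup_integrand_le (hT : IsC0Semigroup T)
    (hM : ∀ t : ℝ, 0 ≤ t → ‖T t‖ ≤ M) (hM0 : 0 < M) (hK0 : 0 < K)
    (hK : ∀ l : ℂ, 0 < l.re → |l.im| * ‖semigroupResolvent T l‖ ≤ K)
    (hz : z ∈ Metric.ball (1 : ℂ) (2 * (M + K + 1))⁻¹) (w : ℝ) :
    ‖Complex.exp (verticalLine w) • dilatedResolvent T z (verticalLine w) ^ 2‖ ≤
      4 * Real.exp 1 * (2 * M ^ 2 * (1 + (2 * π * M / K * w) ^ 2)⁻¹) :=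
  (norm_cexp_smul_dilatedResolvent_sq_le
    (hT.norm_sub_one_smul_verticalLine_lt hM hM0 hK0 hK hz w).le).trans (by
      gcongr; exact hT.norm_semigroupResolvent_verticalLine_sq_le hM hM0 hK0 hK w)

theorem differentiableOn_dunfordSemigroup (hT : IsC0Semigroup T)
    (hM : ∀ t : ℝ, 0 ≤ t → ‖T t‖ ≤ M) (hM0 : 0 < M) (hK0 : 0 < K)
    (hK : ∀ l : ℂ, 0 < l.re → |l.im| * ‖semigroupResolvent T l‖ ≤ K) :
    DifferentiableOn ℂ (dunfordSemigroup T) (Metric.ball 1 (2 * (M + K + 1))⁻¹) :=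
  differentiableOn_integral_of_dominated Metric.isOpen_ball
    (fun _ hz =>
      (hT.continuous_dunfordSemigroup_integrand hM hM0 hK0 hK hz).aestronglyMeasurable)
    ((integrable_two_mul_sq_mul_inv_one_add_sq hM0 hK0).const_mul (4 * Real.exp 1))
    (fun w _ hz => hT.norm_dunfordSemigroup_integrand_le hM hM0 hK0 hK hz w)
    fun w _ hz => (((differentiableAt_dilatedResolvent
      ((hT.norm_sub_one_smul_verticalLine_lt hM hM0 hK0 hK hz w).trans one_half_lt_one)).pow
        2).const_smul (Complex.exp (verticalLine w))).differentiableWithinAt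

theorem norm_dunfordSemigroup_le (hT : IsC0Semigroup T)
    (hM : ∀ t : ℝ, 0 ≤ t → ‖T t‖ ≤ M) (hM0 : 0 < M) (hK0 : 0 < K)
    (hK : ∀ l : ℂ, 0 < l.re → |l.im| * ‖semigroupResolvent T l‖ ≤ K)
    (hz : z ∈ Metric.ball (1 : ℂ) (2 * (M + K + 1))⁻¹) :
    ‖dunfordSemigroup T z‖ ≤ 4 * Real.exp 1 * (M * K) := by
  rw [← integral_two_mul_sq_mul_inv_one_add_sq hM0 hK0, ← integral_const_mul]
  exact norm_integral_le_of_norm_le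
    ((integrable_two_mul_sq_mul_inv_one_add_sq hM0 hK0).const_mul _)
    (.of_forall (hT.norm_dunfordSemigroup_integrand_le hM hM0 hK0 hK hz))

theorem dunfordSemigroup_ofReal (hT : IsC0Semigroup T)
    (hM : ∀ t : ℝ, 0 ≤ t → ‖T t‖ ≤ M) (hM0 : 0 < M) (hK0 : 0 < K)
    (hK : ∀ l : ℂ, 0 < l.re → |l.im| * ‖semigroupResolvent T l‖ ≤ K) {r : ℝ} (hr : 0 < r)
    (hz : (r : ℂ) ∈ Metric.ball (1 : ℂ) (2 * (M + K + 1))⁻¹) : dunfordSemigroup T r = T r := by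
  have hint : Integrable fun w : ℝ =>
      Complex.exp (verticalLine w) • dilatedResolvent T r (verticalLine w) ^ 2 :=
    ((integrable_two_mul_sq_mul_inv_one_add_sq hM0 hK0).const_mul _).mono'
      (hT.continuous_dunfordSemigroup_integrand hM hM0 hK0 hK hz).aestronglyMeasurable
      (.of_forall (hT.norm_dunfordSemigroup_integrand_le hM hM0 hK0 hK hz))
  ext x
  have hinv := (hT.comp_mul_left hr).apply_one_eq_integral_verticalLine
    (fun t ht => hM _ (by positivity)) hM0 hK0
    (fun l => hT.abs_im_mul_norm_semigroupResolvent_comp_mul_left_le hM hK hr) x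
  rw [mul_one] at hinv
  rw [hinv, dunfordSemigroup, ContinuousLinearMap.integral_apply hint]
  congr 1 with w
  rw [smul_apply, hT.dilatedResolvent_ofReal hM (verticalLine_re_pos w) hr
    ((hT.norm_sub_one_smul_verticalLine_lt hM hM0 hK0 hK hz w).trans one_half_lt_one)]

theorem exists_differentiableOn_ball (hT : IsC0Semigroup T)
    (hM : ∀ t : ℝ, 0 ≤ t → ‖T t‖ ≤ M) (hM0 : 0 < M) (hK0 : 0 < K)
    (hK : ∀ l : ℂ, 0 < l.re → |l.im| * ‖semigroupResolvent T l‖ ≤ K) {t : ℝ} (ht : 0 < t) :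
    ∃ F : ℂ → X →L[ℂ] X,
      DifferentiableOn ℂ F (Metric.ball (t : ℂ) ((2 * (M + K + 1))⁻¹ * t)) ∧
      (∀ r : ℝ, (r : ℂ) ∈ Metric.ball (t : ℂ) ((2 * (M + K + 1))⁻¹ * t) → F r = T r) ∧
      ∀ z ∈ Metric.ball (t : ℂ) ((2 * (M + K + 1))⁻¹ * t), ‖F z‖ ≤ 4 * Real.exp 1 * (M * K) := by
  have hTt := hT.comp_mul_left ht
  have hMt : ∀ s : ℝ, 0 ≤ s → ‖T (t * s)‖ ≤ M := fun s hs => hM _ (by positivity)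
  have hKt : ∀ l : ℂ, 0 < l.re → |l.im| * ‖semigroupResolvent (fun s => T (t * s)) l‖ ≤ K :=
    fun l => hT.abs_im_mul_norm_semigroupResolvent_comp_mul_left_le hM hK ht
  have htc : (t : ℂ) ≠ 0 := Complex.ofReal_ne_zero.2 ht.ne'
  have hmem : MapsTo (· / (t : ℂ)) (Metric.ball (t : ℂ) ((2 * (M + K + 1))⁻¹ * t))
      (Metric.ball 1 (2 * (M + K + 1))⁻¹) := fun z hz => by
    rw [mem_ball_iff_norm] at hz ⊢
    rwa [← div_self htc, ← sub_div, norm_div, Complex.norm_of_nonneg ht.le, div_lt_iff₀ ht]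
  refine ⟨fun z => dunfordSemigroup (fun s => T (t * s)) (z / t),
    (hTt.differentiableOn_dunfordSemigroup hMt hM0 hK0 hKt).comp (by fun_prop) hmem,
    fun r hr => ?_, fun z hz => hTt.norm_dunfordSemigroup_le hMt hM0 hK0 hKt (hmem hz)⟩
  have hr0 : 0 < r :=
    pos_of_ofReal_mem_ball (inv_le_one_of_one_le₀ (by linarith)) ht.le hr
  have hrt := hmem hr
  simp only [← Complex.ofReal_div] at hrt ⊢
  rw [hTt.dunfordSemigroup_ofReal hMt hM0 hK0 hKt (by positivity) hrt, mul_div_cancel₀ _ ht.ne']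

end IsC0Semigroup

end DunfordIntegral

section HolomorphicExtension

variable {X : Type u} [NormedAddCommGroup X] [NormedSpace ℂ X] {T : ℝ → X →L[ℂ] X}

/-- `T` extends to a holomorphic semigroup, bounded by `C`, on the sector `|arg z| ≤ θ`. The
semigroup law, strong continuity and the bound hold on the closed sector, holomorphy on its
interior. -/
def HasHolomorphicExtension (T : ℝ → X →L[ℂ] X) (θ C : ℝ) : Prop :=
  ∃ S : ℂ → X →L[ℂ] X,
    (∀ t : ℝ, 0 ≤ t → S (t : ℂ) = T t) ∧
    (∀ z₁ z₂ : ℂ, z₁ ≠ 0 → z₂ ≠ 0 → |z₁.arg| ≤ θ → |z₂.arg| ≤ θ →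
      S (z₁ + z₂) = (S z₁).comp (S z₂)) ∧
    DifferentiableOn ℂ S {z : ℂ | z ≠ 0 ∧ |z.arg| < θ} ∧
    (∀ x : X, Tendsto (fun z => S z x) (𝓝[{z : ℂ | z ≠ 0 ∧ |z.arg| ≤ θ}] 0) (𝓝 x)) ∧
    ∀ z : ℂ, z ≠ 0 → |z.arg| ≤ θ → ‖S z‖ ≤ C

theorem HasHolomorphicExtension.mono {θ θ' C C' : ℝ} (h : HasHolomorphicExtension T θ C)
    (hθ : θ' ≤ θ) (hC : C ≤ C') : HasHolomorphicExtension T θ' C' := by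
  obtain ⟨S, hST, hadd, hdiff, hcont, hbound⟩ := h
  exact ⟨S, hST, fun z₁ z₂ h₁ h₂ ha₁ ha₂ => hadd z₁ z₂ h₁ h₂ (ha₁.trans hθ) (ha₂.trans hθ),
    hdiff.mono fun z hz => ⟨hz.1, hz.2.trans_le hθ⟩,
    fun x => (hcont x).mono_left (nhdsWithin_mono _ fun z hz => ⟨hz.1, hz.2.trans hθ⟩),
    fun z hz ha => (hbound z hz (ha.trans hθ)).trans hC⟩

variable [CompleteSpace X] {S : ℂ → X →L[ℂ] X} {ρ C : ℝ}

namespace IsC0Semigroup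

theorem map_add_ofReal_of_differentiableOn (hT : IsC0Semigroup T) (hρ : 0 < ρ)
    (hST : ∀ t : ℝ, 0 ≤ t → S t = T t) (hS : DifferentiableOn ℂ S (slopeSector ρ)) {z : ℂ}
    (hz : z ∈ slopeSector ρ) {r : ℝ} (hr : 0 < r) : S (z + r) = S z * S r := by
  have hr_mem := ofReal_mem_slopeSector hρ hr
  refine eqOn_of_eq_ofReal (isOpen_slopeSector ρ) (convex_slopeSector ρ).isPreconnected
    (f := fun z => S (z + r)) (g := fun z => S z * S r)
    (hS.comp (by fun_prop) fun z hz => add_mem_slopeSector hz hr_mem) (hS.mul_const _)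
    (ofReal_mem_slopeSector hρ one_pos) (fun t ht => ?_) hz
  have ht0 : 0 ≤ t := (re_pos_of_mem_slopeSector hρ ht).le
  rw [← Complex.ofReal_add, hST _ (by positivity), hST _ ht0, hST _ hr.le, hT.2.1 t r ht0 hr.le]
  rfl

theorem map_add_of_differentiableOn (hT : IsC0Semigroup T) (hρ : 0 < ρ)
    (hST : ∀ t : ℝ, 0 ≤ t → S t = T t) (hS : DifferentiableOn ℂ S (slopeSector ρ)) {z w : ℂ}
    (hz : z ∈ slopeSector ρ) (hw : w ∈ slopeSector ρ) : S (z + w) = S z * S w :=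
  eqOn_of_eq_ofReal (isOpen_slopeSector ρ) (convex_slopeSector ρ).isPreconnected
    (f := fun w => S (z + w)) (g := fun w => S z * S w)
    (hS.comp (by fun_prop) fun w hw => add_mem_slopeSector hz hw) (hS.const_mul _)
    (ofReal_mem_slopeSector hρ one_pos)
    (fun _ hr => hT.map_add_ofReal_of_differentiableOn hρ hST hS hz
      (re_pos_of_mem_slopeSector hρ hr)) hw

/-- Strong convergence `S z → 1` is clear on the dense range of the `T t` with `t > 0`, by
continuity of `S` at `t`; the bound on `S` carries it over to all vectors. -/
theorem tendsto_apply_of_differentiableOn (hT : IsC0Semigroup T) (hρ : 0 < ρ)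
    (hST : ∀ t : ℝ, 0 ≤ t → S t = T t) (hS : DifferentiableOn ℂ S (slopeSector ρ))
    (hC : ∀ z ∈ slopeSector ρ, ‖S z‖ ≤ C) (x : X) :
    Tendsto (fun z => S z x) (𝓝[slopeSector ρ] 0) (𝓝 x) := by
  have hC0 : 0 ≤ C := (norm_nonneg _).trans (hC _ (ofReal_mem_slopeSector hρ one_pos))
  have hrange : ∀ t : ℝ, 0 < t →
      Tendsto (fun z => S z (T t x)) (𝓝[slopeSector ρ] 0) (𝓝 (T t x)) := fun t ht => by
    have ht_mem := ofReal_mem_slopeSector hρ ht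
    have hcont : ContinuousAt (fun z : ℂ => S (z + t) x) 0 := by
      have hSt : ContinuousAt S (0 + t) := by
        rw [zero_add]
        exact (hS.differentiableAt ((isOpen_slopeSector ρ).mem_nhds ht_mem)).continuousAt
      exact (ContinuousAt.comp (f := (· + (t : ℂ))) hSt (by fun_prop)).clm_apply
        continuousAt_const
    rw [ContinuousAt, zero_add, hST t ht.le] at hcont
    refine (hcont.mono_left nhdsWithin_le_nhds).congr' ?_
    filter_upwards [self_mem_nhdsWithin] with z hz
    rw [hT.map_add_of_differentiableOn hρ hST hS hz ht_mem, hST t ht.le]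
    rfl
  rw [Metric.tendsto_nhds]
  intro η hη
  obtain ⟨t, htx, ht⟩ := ((Metric.tendsto_nhds.1 (hT.2.2 x) (η / (2 * (C + 1)))
    (by positivity)).and self_mem_nhdsWithin).exists
  filter_upwards [Metric.tendsto_nhds.1 (hrange t ht) (η / 2) (by positivity),
    self_mem_nhdsWithin] with z hz hz_mem
  rw [dist_eq_norm] at htx hz ⊢
  have hSz : ‖S z (T t x - x)‖ ≤ C * ‖T t x - x‖ :=
    (S z).le_of_opNorm_le (hC z hz_mem) _
  calc ‖S z x - x‖ = ‖(S z (T t x) - T t x) + ((T t x - x) - S z (T t x - x))‖ := by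
        rw [map_sub]; abel_nf
    _ ≤ ‖S z (T t x) - T t x‖ + (‖T t x - x‖ + ‖S z (T t x - x)‖) :=
        (norm_add_le _ _).trans (by gcongr; exact norm_sub_le _ _)
    _ ≤ ‖S z (T t x) - T t x‖ + (C + 1) * ‖T t x - x‖ := by linarith
    _ < η / 2 + (C + 1) * (η / (2 * (C + 1))) := by gcongr
    _ = η := by field_simp; ring

theorem hasHolomorphicExtension_of_ball (hT : IsC0Semigroup T) {θ : ℝ} (hρ : 0 < ρ)
    (hρ1 : ρ ≤ 1) (hθ : θ ≤ ρ / 2)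
    (hF : ∀ t : ℝ, 0 < t → ∃ F : ℂ → X →L[ℂ] X,
      DifferentiableOn ℂ F (Metric.ball (t : ℂ) (ρ * t)) ∧
      (∀ r : ℝ, (r : ℂ) ∈ Metric.ball (t : ℂ) (ρ * t) → F r = T r) ∧
      ∀ z ∈ Metric.ball (t : ℂ) (ρ * t), ‖F z‖ ≤ C) :
    HasHolomorphicExtension T θ C := by
  obtain ⟨S, hST, hS, hC⟩ := exists_differentiableOn_slopeSector hρ hF
  have hmem : ∀ z : ℂ, z ≠ 0 → |z.arg| ≤ θ → z ∈ slopeSector ρ := fun z hz ha =>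
    mem_slopeSector_of_abs_arg_le hρ hρ1 hz (ha.trans hθ)
  exact ⟨S, hST, fun z₁ z₂ h₁ h₂ ha₁ ha₂ =>
      hT.map_add_of_differentiableOn hρ hST hS (hmem z₁ h₁ ha₁) (hmem z₂ h₂ ha₂),
    hS.mono fun z hz => hmem z hz.1 hz.2.le,
    fun x => (hT.tendsto_apply_of_differentiableOn hρ hST hS hC x).mono_left
      (nhdsWithin_mono _ fun z hz => hmem z hz.1 hz.2),
    fun z hz ha => hC z (hmem z hz ha)⟩

end IsC0Semigroup

theorem two_mul_add_two_pi_mul_div_add_one_le {M ε : ℝ} (hM1 : 1 ≤ M) (hε : 0 < ε) (hε2 : ε ≤ 2) :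
    2 * (M + 2 * π * M / ε + 1) ≤ 24 * M / ε := by
  rw [le_div_iff₀ hε]
  have hcancel : 2 * (M + 2 * π * M / ε + 1) * ε = 2 * (M * ε + 2 * π * M + ε) := by
    field_simp
  have hMε : M * ε ≤ M * 2 := by gcongr
  have hπM : π * M ≤ 3.15 * M := by gcongr; exact Real.pi_lt_d2.le
  linarith

theorem one_le_four_mul_one_add_log_div {M ε : ℝ} (hM1 : 1 ≤ M) (hε : 0 < ε) (hε2 : ε ≤ 2) :
    1 ≤ 4 * (1 + Real.log (M / ε)) := by
  have hhalf : 1 / 2 ≤ M / ε := div_le_div₀ (by linarith) hM1 hε hε2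
  have hlog : Real.log (1 / 2) ≤ Real.log (M / ε) := Real.log_le_log (by norm_num) hhalf
  rw [one_div, Real.log_inv] at hlog
  linarith [Real.log_two_lt_d9]

theorem stmt4_general (hT : IsC0Semigroup T) {M ε : ℝ} (hM1 : 1 ≤ M)
    (hM : ∀ t : ℝ, 0 ≤ t → ‖T t‖ ≤ M) (hε : 0 < ε)
    (hnear : ∀ t : ℝ, 0 < t → ‖T t - 1‖ ≤ 2 - ε) :
    HasHolomorphicExtension T (1 / 48 * ε / M) (8 * π * Real.exp 1 * (M ^ 2 / ε)) := by
  have hε2 : ε ≤ 2 := by linarith [hnear 1 one_pos, norm_nonneg (T 1 - 1)]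
  have hK : 0 < 2 * π * M / ε := by positivity
  have hρ : (24 * M / ε)⁻¹ ≤ (2 * (M + 2 * π * M / ε + 1))⁻¹ :=
    inv_anti₀ (by positivity) (two_mul_add_two_pi_mul_div_add_one_le hM1 hε hε2)
  have hext : HasHolomorphicExtension T (1 / 48 * ε / M)
      (4 * Real.exp 1 * (M * (2 * π * M / ε))) :=
    hT.hasHolomorphicExtension_of_ball (by positivity) (inv_le_one_of_one_le₀ (by linarith))
      ((le_of_eq (by field_simp; norm_num)).trans (div_le_div_of_nonneg_right hρ two_pos.le))
      fun t => hT.exists_differentiableOn_ball hM (by positivity) hK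
        fun l => hT.abs_im_mul_norm_semigroupResolvent_le hM hε hnear
  exact hext.mono le_rfl (le_of_eq (by ring))

end HolomorphicExtension

/-- Quantitative holomorphic extension under the condition `‖T t - I‖ ≤ 2 - ε`:
there are universal constants `c₁, c₂ > 0` such that any `C₀`-semigroup with
`‖T t‖ ≤ M` (`M ≥ 1`) and `‖T t - I‖ ≤ 2 - ε` for all `t > 0` (with `0 < ε ≤ 2`)
extends to a bounded holomorphic semigroup `S` on the sector
`|arg z| ≤ c₁ · ε/M²`, with `‖S z‖ ≤ c₂ · (M²/ε) · (1 + log (M/ε))` there. -/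
theorem stmt4 :
    ∃ c₁ c₂ : ℝ, 0 < c₁ ∧ 0 < c₂ ∧
      ∀ (X : Type u) [NormedAddCommGroup X] [NormedSpace ℂ X] [CompleteSpace X]
        (T : ℝ → X →L[ℂ] X), IsC0Semigroup T →
      ∀ M : ℝ, 1 ≤ M → (∀ t : ℝ, 0 ≤ t → ‖T t‖ ≤ M) →
      ∀ ε : ℝ, 0 < ε → ε ≤ 2 →
      (∀ t : ℝ, 0 < t → ‖T t - 1‖ ≤ 2 - ε) →
      ∃ S : ℂ → X →L[ℂ] X,
        (∀ t : ℝ, 0 ≤ t → S (t : ℂ) = T t) ∧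
        (∀ z₁ z₂ : ℂ, z₁ ≠ 0 → z₂ ≠ 0 →
          |z₁.arg| ≤ c₁ * ε / M ^ 2 → |z₂.arg| ≤ c₁ * ε / M ^ 2 →
          S (z₁ + z₂) = (S z₁).comp (S z₂)) ∧
        DifferentiableOn ℂ S {z : ℂ | z ≠ 0 ∧ |z.arg| < c₁ * ε / M ^ 2} ∧
        (∀ x : X, Tendsto (fun z => S z x)
          (nhdsWithin 0 {z : ℂ | z ≠ 0 ∧ |z.arg| ≤ c₁ * ε / M ^ 2}) (nhds x)) ∧
        ∀ z : ℂ, z ≠ 0 → |z.arg| ≤ c₁ * ε / M ^ 2 →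
          ‖S z‖ ≤ c₂ * (M ^ 2 / ε) * (1 + Real.log (M / ε)) :=
  ⟨1 / 48, 4 * (8 * π * Real.exp 1), by positivity, by positivity,
    fun X _ _ _ T hT M hM1 hM ε hε hε2 hnear =>
      (stmt4_general hT hM1 hM hε hnear).mono (by gcongr; exact le_self_pow₀ hM1 two_ne_zero)
        ((le_mul_of_one_le_right (by positivity)
          (one_le_four_mul_one_add_log_div hM1 hε hε2)).trans_eq (by ring))⟩
end
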